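/- For each degree n ≥ 3 and each ε > 0 there exists a constant C = C(n,ε) such that every number field K of degree n over ℚ satisfies |Cl_K[2]| ≤ C · D_K^{1/2 − 1/(2n) + ε}. -/

import Mathlib

open NumberField

/-- The order of the `ℓ`-torsion subgroup of the class group of a number field `K`. -/
noncomputable def clTor (K : Type*) [Field K] (ℓ : ℕ) : ℕ :=
  Nat.card {c : ClassGroup (𝓞 K) // c ^ ℓ = 1}

section
open Polynomial

/-- Vandermonde divisibility. -/
lemma bp_vandermonde_dvd {E : ℕ} (x : Fin E → ℤ) (P : Fin E → ℤ[X]) :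
    (Matrix.vandermonde x).det ∣ (Matrix.of fun k j => (P j).eval (x k)).det := by
  classical
  set W : ℤ[X] := ∏ k, (X - C (x k)) with hW
  have hWm : W.Monic := monic_prod_of_monic _ _ fun k _ => monic_X_sub_C _
  have hdeg : W.natDegree = E := by
    rw [hW, natDegree_prod_of_monic _ _ fun k _ => monic_X_sub_C _]; simp [-eq_intCast, natDegree_X_sub_C]
  have hfac : (Matrix.of fun k j => (P j).eval (x k)) =
      Matrix.vandermonde x * Matrix.of (fun (i j : Fin E) => (P j %ₘ W).coeff i) := by
    ext k j
    rw [Matrix.mul_apply]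
    simp only [Matrix.of_apply, Matrix.vandermonde_apply]
    have h0 : W.eval (x k) = 0 := by
      rw [hW, eval_prod]
      exact Finset.prod_eq_zero (Finset.mem_univ k) (by simp)
    have h1 : (P j).eval (x k) = (P j %ₘ W).eval (x k) := by
      conv_lhs => rw [← modByMonic_add_div (P j) W]
      simp [h0]
    rw [h1]
    by_cases hE : E = 0
    · subst hE; exact k.elim0
    have hlt : (P j %ₘ W).natDegree < E := by
      have := natDegree_modByMonic_lt (P j) hWm (by
        intro h; rw [h] at hdeg; simp at hdeg; omega)
      omega
    rw [eval_eq_sum_range' hlt, ← Fin.sum_univ_eq_sum_range (fun i => (P j %ₘ W).coeff i * x k ^ i)]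
    exact Finset.sum_congr rfl fun i _ => mul_comm _ _
  rw [hfac, Matrix.det_mul]
  exact dvd_mul_right _ _

lemma bp_pow_dvd_vandermonde {E : ℕ} (x : Fin E → ℤ) (p : ℤ) (h : ∀ i j, p ∣ x i - x j) :
    p ^ (E * (E - 1) / 2) ∣ (Matrix.vandermonde x).det := by
  rw [Matrix.det_vandermonde]
  have h1 : ∏ i : Fin E, ∏ j ∈ Finset.Ioi i, p ∣ ∏ i : Fin E, ∏ j ∈ Finset.Ioi i, (x j - x i) :=
    Finset.prod_dvd_prod_of_dvd _ _ fun i _ => Finset.prod_dvd_prod_of_dvd _ _ fun j _ => h j i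
  refine dvd_trans (dvd_of_eq ?_) h1
  simp only [Finset.prod_const, Fin.card_Ioi]
  rw [Finset.prod_pow_eq_pow_sum, Fin.sum_univ_eq_sum_range (fun i => E - 1 - i),
    Finset.sum_range_reflect (fun i => i) E, Finset.sum_range_id]

/-- Hensel-type lifting by a polynomial. -/
lemma bp_hensel (f : ℤ[X]) (s a b p : ℤ) (hcop : IsCoprime (2 * s * b) p)
    (hb : p ∣ s * b ^ 2 - f.eval a) (N : ℕ) :
    ∃ h : ℤ[X], ∀ x, p ∣ x - a → p ∣ h.eval x - b ∧ p ^ N ∣ s * (h.eval x) ^ 2 - f.eval x := by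
  obtain ⟨c, d, hcd⟩ := hcop
  induction N with
  | zero => exact ⟨C b, fun x _ => by simp⟩
  | succ N ih =>
    rcases Nat.eq_zero_or_pos N with rfl | hN
    · refine ⟨C b, fun x hx => ⟨by simp, ?_⟩⟩
      have h1 : p ∣ f.eval x - f.eval a := dvd_trans hx (sub_dvd_eval_sub _ _ _)
      have := dvd_sub hb h1
      simpa using this
    obtain ⟨h, hh⟩ := ih
    refine ⟨h - C c * (C s * h ^ 2 - f), fun x hx => ?_⟩
    obtain ⟨⟨u, hu⟩, ⟨v, hv⟩⟩ := hh x hx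
    have hp1 : p ∣ p ^ N := dvd_pow_self p (by omega)
    obtain ⟨q, hq⟩ := hp1
    simp only [eval_sub, eval_mul, eval_C, eval_pow]
    set H := h.eval x
    set F := f.eval x
    constructor
    · refine ⟨u - c * q * v, ?_⟩
      rw [hv, hq]; linear_combination hu
    · -- e (1 - 2 s H c) + s c^2 e^2
      refine ⟨v * (d - 2 * s * u * c) + s * c ^ 2 * v ^ 2 * q, ?_⟩
      have e1 : s * (H - c * (s * H ^ 2 - F)) ^ 2 - F =
        (s * H ^ 2 - F) * (1 - 2 * s * c * H) + s * c ^ 2 * (s * H ^ 2 - F) ^ 2 := by ring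
      have hH : H = b + p * u := by linarith
      rw [e1, hv]
      have e2 : 1 - 2 * s * c * H = p * (d - 2 * s * u * c) := by
        rw [hH]; linear_combination -hcd
      rw [e2, pow_succ]
      linear_combination (s * c ^ 2 * v ^ 2 * p ^ N) * hq

/-- Determinant divisibility: points on `s y^2 = f x` in one residue class. -/
lemma bp_det_dvd (f : ℤ[X]) (s a b p : ℤ) (hcop : IsCoprime (2 * s * b) p)
    (hb : p ∣ s * b ^ 2 - f.eval a) {E : ℕ} (x y : Fin E → ℤ)
    (hx : ∀ k, p ∣ x k - a) (hy : ∀ k, p ∣ y k - b) (hxy : ∀ k, f.eval (x k) = s * y k ^ 2) :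
    p ^ (E * (E - 1) / 2) ∣
      (Matrix.of fun k j : Fin E => x k ^ ((j : ℕ) / 2) * y k ^ ((j : ℕ) % 2)).det := by
  set N := E * (E - 1) / 2
  obtain ⟨h, hh⟩ := bp_hensel f s a b p hcop hb N
  have hyh : ∀ k, p ^ N ∣ y k - h.eval (x k) := by
    intro k
    obtain ⟨h1, h2⟩ := hh _ (hx k)
    rw [hxy k, ← mul_sub, sq_sub_sq] at h2
    have h3 : IsCoprime (s * (h.eval (x k) + y k)) (p ^ N) := by
      apply IsCoprime.pow_right
      obtain ⟨u, hu⟩ := h1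
      obtain ⟨v, hv⟩ := hy k
      have : s * (h.eval (x k) + y k) = 2 * s * b + p * (s * (u + v)) := by
        linear_combination s * hu + s * hv
      rw [this]
      exact (IsCoprime.add_mul_left_left_iff).2 hcop
    rw [← mul_assoc] at h2
    have := h3.symm.dvd_of_dvd_mul_left h2
    rw [← neg_sub]; exact (dvd_neg).2 this
  have h1 : p ^ N ∣ (Matrix.of fun k j : Fin E =>
      (X ^ ((j : ℕ) / 2) * h ^ ((j : ℕ) % 2) : ℤ[X]).eval (x k)).det :=
    dvd_trans (bp_pow_dvd_vandermonde x p fun i j => by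
      have := dvd_sub (hx i) (hx j); simpa using this) (bp_vandermonde_dvd x _)
  rw [← Int.modEq_zero_iff_dvd] at h1 ⊢
  refine Int.ModEq.trans ?_ h1
  rw [Matrix.det_apply', Matrix.det_apply']
  refine Int.ModEq.sum fun σ _ => Int.ModEq.mul_left _ (Int.ModEq.prod fun i _ => ?_)
  simp only [Matrix.of_apply, eval_mul, eval_pow, eval_X]
  refine Int.ModEq.mul_left _ (Int.ModEq.pow _ ?_)
  exact (Int.modEq_iff_dvd.2 (hyh _)).symm
end

section
open Polynomial

lemma bp_det_bound {E : ℕ} (A : Matrix (Fin E) (Fin E) ℤ) (b : Fin E → ℝ)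
    (h : ∀ k j, |(A k j : ℝ)| ≤ b j) : |(A.det : ℝ)| ≤ (E.factorial : ℝ) * ∏ j, b j := by
  rw [Matrix.det_apply]
  push_cast
  refine (Finset.abs_sum_le_sum_abs _ _).trans ?_
  have : ∀ σ ∈ (Finset.univ : Finset (Equiv.Perm (Fin E))),
      |(((Equiv.Perm.sign σ) • ∏ i, A (σ i) i : ℤ) : ℝ)| ≤ ∏ j, b j := by
    intro σ _
    have h1 : |(((Equiv.Perm.sign σ) • ∏ i, A (σ i) i : ℤ) : ℝ)| = ∏ i, |(A (σ i) i : ℝ)| := by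
      rcases Int.units_eq_one_or (Equiv.Perm.sign σ) with h | h <;> simp [h, Finset.abs_prod]
    rw [h1]
    exact Finset.prod_le_prod (fun _ _ => abs_nonneg _) fun i _ => h _ _
  refine (Finset.sum_le_sum this).trans ?_
  simp [Fintype.card_perm]

lemma bp_prod_bound (B Y : ℝ) (M : ℕ) :
    ∏ j : Fin (2 * M), (B ^ ((j : ℕ) / 2) * Y ^ ((j : ℕ) % 2)) = B ^ (M * (M - 1)) * Y ^ M := by
  rw [Fin.prod_univ_eq_prod_range (fun j => B ^ (j / 2) * Y ^ (j % 2))]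
  induction M with
  | zero => simp
  | succ M ih =>
    rw [show 2 * (M + 1) = 2 * M + 1 + 1 by ring, Finset.prod_range_succ, Finset.prod_range_succ, ih]
    have h1 : 2 * M / 2 = M := by omega
    have h2 : (2 * M + 1) / 2 = M := by omega
    have h3 : 2 * M % 2 = 0 := by omega
    have h4 : (2 * M + 1) % 2 = 1 := by omega
    rw [h1, h2, h3, h4]
    rcases M with _ | M
    · simp
    · simp only [Nat.add_sub_cancel]; ring

lemma bp_exists_relation {E : ℕ} (T : Finset ℤ) (v : ℤ → Fin E → ℤ)
    (h : ∀ e : Fin E → ℤ, (∀ k, e k ∈ T) → (Matrix.of fun k j => v (e k) j).det = 0) :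
    ∃ c : Fin E → ℚ, c ≠ 0 ∧ ∀ x ∈ T, ∑ j, c j * (v x j : ℚ) = 0 := by
  classical
  let w : T → Fin E → ℚ := fun x j => (v x j : ℚ)
  by_cases hW : Submodule.span ℚ (Set.range w) = ⊤
  · exfalso
    obtain ⟨κ, a, ha, hs, hl⟩ := exists_linearIndependent' ℚ w
    rw [hW] at hs
    let bas : Module.Basis κ ℚ (Fin E → ℚ) := Module.Basis.mk hl hs.ge
    have : Finite κ := Finite.of_injective a ha
    have : Fintype κ := Fintype.ofFinite κ
    have hcard : Fintype.card κ = E := by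
      rw [← Module.finrank_eq_card_basis bas]; simp
    let eq : Fin E ≃ κ := (Fintype.equivFinOfCardEq hcard).symm
    have hli : LinearIndependent ℚ (fun k : Fin E => w (a (eq k))) := hl.comp eq eq.injective
    have h0 := h (fun k => (a (eq k) : ℤ)) (fun k => (a (eq k)).2)
    have hdet : (Matrix.of fun k j => w (a (eq k)) j).det = 0 := by
      have := congrArg (Int.castRingHom ℚ) h0
      rw [RingHom.map_det] at this
      simpa [w, RingHom.mapMatrix_apply, Matrix.map, Matrix.of_apply] using this
    have hu : IsUnit (Matrix.of fun k j => w (a (eq k)) j) :=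
      Matrix.linearIndependent_rows_iff_isUnit.1 hli
    rw [Matrix.isUnit_iff_isUnit_det, hdet] at hu
    exact not_isUnit_zero hu
  · obtain ⟨φ, hφ, hle⟩ := Submodule.exists_le_ker_of_lt_top _ (lt_top_iff_ne_top.2 hW)
    refine ⟨fun j => φ (Pi.single j 1), ?_, ?_⟩
    · intro h0
      apply hφ
      refine LinearMap.pi_ext' fun j => LinearMap.ext_ring ?_
      simpa using congrFun h0 j
    · intro x hx
      have h1 : φ (w ⟨x, hx⟩) = 0 := hle (Submodule.subset_span ⟨⟨x, hx⟩, rfl⟩)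
      rw [LinearMap.pi_apply_eq_sum_univ φ (w ⟨x, hx⟩)] at h1
      rw [← h1]
      refine Finset.sum_congr rfl fun j _ => ?_
      simp only [w, smul_eq_mul]
      rw [mul_comm]
      congr 2
      ext i; simp [Pi.single_apply, eq_comm]

lemma bp_class (f : ℤ[X]) (s a b : ℤ) (p : ℤ) (M : ℕ) (B Y : ℝ) (hs : s ^ 2 = 1)
    (hcop : IsCoprime (2 * s * b) p) (hb : p ∣ s * b ^ 2 - f.eval a)
    (T : Finset ℤ) (y : ℤ → ℤ) 
    (hT : ∀ x ∈ T, |(x : ℝ)| ≤ B ∧ |(y x : ℝ)| ≤ Y ∧ f.eval x = s * y x ^ 2 ∧ p ∣ x - a ∧ p ∣ y x - b)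
    (hsize : ((2 * M).factorial : ℝ) * (B ^ (M * (M - 1)) * Y ^ M) < (p : ℝ) ^ (M * (2 * M - 1)))
    (hns : ∀ P Q : ℚ[X], P ^ 2 = C (s : ℚ) * f.map (Int.castRingHom ℚ) * Q ^ 2 → Q = 0) :
    T.card ≤ 2 * M + f.natDegree := by
  classical
  have hdet : ∀ e : Fin (2 * M) → ℤ, (∀ k, e k ∈ T) →
      (Matrix.of fun k (j : Fin (2 * M)) => 
        (fun (x : ℤ) (j : Fin (2 * M)) => x ^ ((j : ℕ) / 2) * y x ^ ((j : ℕ) % 2)) (e k) j).det = 0 := by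
    intro e he
    have h1 := bp_det_dvd f s a b p hcop hb e (fun k => y (e k)) (fun k => (hT _ (he k)).2.2.2.1)
      (fun k => (hT _ (he k)).2.2.2.2) (fun k => (hT _ (he k)).2.2.1)
    refine Int.eq_zero_of_abs_lt_dvd h1 ?_
    have h2 := bp_det_bound (Matrix.of fun k j : Fin (2 * M) => e k ^ ((j : ℕ) / 2) * y (e k) ^ ((j : ℕ) % 2))
      (fun j => B ^ ((j : ℕ) / 2) * Y ^ ((j : ℕ) % 2)) (by
        intro k j
        simp only [Matrix.of_apply]
        push_cast
        rw [abs_mul, abs_pow, abs_pow]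
        obtain ⟨hB, hY, -⟩ := hT _ (he k)
        have hB0 : 0 ≤ B := (abs_nonneg _).trans hB
        gcongr)
    rw [bp_prod_bound] at h2
    have h3 := h2.trans_lt hsize
    have h4 : 2 * M * (2 * M - 1) / 2 = M * (2 * M - 1) := by
      rw [mul_assoc, Nat.mul_div_cancel_left _ (by norm_num)]
    rw [h4]
    exact_mod_cast h3
  obtain ⟨c, hc, hrel⟩ := bp_exists_relation T
    (fun (x : ℤ) (j : Fin (2 * M)) => x ^ ((j : ℕ) / 2) * y x ^ ((j : ℕ) % 2)) hdet
  let P : ℚ[X] := ∑ i ∈ Finset.range M, C (if h : 2 * i < 2 * M then c ⟨2 * i, h⟩ else 0) * X ^ i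
  let Q : ℚ[X] := ∑ i ∈ Finset.range M, C (if h : 2 * i + 1 < 2 * M then c ⟨2 * i + 1, h⟩ else 0) * X ^ i
  have hPd : P.natDegree ≤ M := natDegree_sum_le_of_forall_le _ _ fun i hi =>
    (natDegree_C_mul_X_pow_le _ _).trans (Finset.mem_range.1 hi).le
  have hQd : Q.natDegree ≤ M := natDegree_sum_le_of_forall_le _ _ fun i hi =>
    (natDegree_C_mul_X_pow_le _ _).trans (Finset.mem_range.1 hi).le
  have hPc : ∀ i (h : 2 * i < 2 * M), P.coeff i = c ⟨2 * i, h⟩ := by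
    intro i h
    simp only [P, finsetSum_coeff, coeff_C_mul, coeff_X_pow]
    rw [Finset.sum_eq_single i]
    · simp [h]
    · intro j _ hj; simp [Ne.symm hj]
    · intro hi; simp at hi; omega
  have hQc : ∀ i (h : 2 * i + 1 < 2 * M), Q.coeff i = c ⟨2 * i + 1, h⟩ := by
    intro i h
    simp only [Q, finsetSum_coeff, coeff_C_mul, coeff_X_pow]
    rw [Finset.sum_eq_single i]
    · simp [h]
    · intro j _ hj; simp [Ne.symm hj]
    · intro hi; simp at hi; omega
  set F := f.map (Int.castRingHom ℚ) with hF
  set G : ℚ[X] := P ^ 2 - C (s : ℚ) * F * Q ^ 2 with hG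
  have hG0 : G ≠ 0 := by
    intro h0
    have hPQ := sub_eq_zero.1 h0
    have hQ0 := hns P Q hPQ
    have hP0 : P = 0 := by
      rw [hQ0] at hPQ; simpa using hPQ
    apply hc
    ext ⟨j, hj⟩
    rcases Nat.even_or_odd' j with ⟨i, rfl | rfl⟩
    · rw [← hPc i hj, hP0]; simp
    · rw [← hQc i hj, hQ0]; simp
  have hGd : G.natDegree ≤ 2 * M + f.natDegree := by
    have hFd : F.natDegree ≤ f.natDegree := natDegree_map_le
    have h1 : (P ^ 2).natDegree ≤ 2 * M := natDegree_pow_le.trans (by omega)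
    have h2 : (C (s : ℚ) * F * Q ^ 2).natDegree ≤ f.natDegree + 2 * M := by
      refine natDegree_mul_le.trans (add_le_add ((natDegree_C_mul_le _ _).trans hFd) ?_)
      exact natDegree_pow_le.trans (by omega)
    refine (natDegree_sub_le _ _).trans ?_
    omega
  have hroot : ∀ x ∈ T, G.eval (x : ℚ) = 0 := by
    intro x hx
    have h1 := hrel x hx
    have h2 : ∑ j, c j * (((x ^ ((j : ℕ) / 2) * y x ^ ((j : ℕ) % 2) : ℤ)) : ℚ) =
        P.eval (x : ℚ) + Q.eval (x : ℚ) * (y x : ℚ) := by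
      have h3 : ∀ j : Fin (2 * M), c j * (((x ^ ((j : ℕ) / 2) * y x ^ ((j : ℕ) % 2) : ℤ)) : ℚ) =
        (fun j : ℕ => (if h : j < 2 * M then c ⟨j, h⟩ else 0) * 
          ((x : ℚ) ^ (j / 2) * (y x : ℚ) ^ (j % 2))) j := by
        intro j; simp
      rw [Finset.sum_congr rfl fun j _ => h3 j,
        Fin.sum_univ_eq_sum_range (fun j : ℕ => (if h : j < 2 * M then c ⟨j, h⟩ else 0) *
          ((x : ℚ) ^ (j / 2) * (y x : ℚ) ^ (j % 2)))]
      have h4 : ∀ (g : ℕ → ℚ) (m : ℕ), ∑ j ∈ Finset.range (2 * m), g j =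
          ∑ i ∈ Finset.range m, g (2 * i) + ∑ i ∈ Finset.range m, g (2 * i + 1) := by
        intro g m
        induction m with
        | zero => simp
        | succ m ih =>
          rw [show 2 * (m + 1) = 2 * m + 1 + 1 by ring, Finset.sum_range_succ, Finset.sum_range_succ,
            ih, Finset.sum_range_succ, Finset.sum_range_succ]
          ring
      rw [h4]
      simp only [P, Q, eval_finsetSum, eval_mul, eval_C, eval_pow, eval_X]
      congr 1
      · refine Finset.sum_congr rfl fun i _ => ?_
        have : 2 * i % 2 = 0 := by omega
        have h' : 2 * i / 2 = i := by omega
        rw [this, h']; simp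
      · rw [Finset.sum_mul]
        refine Finset.sum_congr rfl fun i _ => ?_
        have : (2 * i + 1) % 2 = 1 := by omega
        have h' : (2 * i + 1) / 2 = i := by omega
        rw [this, h', pow_one, mul_assoc]
    rw [h2] at h1
    have h5 : F.eval (x : ℚ) = (s : ℚ) * (y x : ℚ) ^ 2 := by
      have := (hT x hx).2.2.1
      rw [hF, eval_intCast_map, Int.cast_id, this]; simp
    have h6 : P.eval (x : ℚ) = - (Q.eval (x : ℚ) * (y x : ℚ)) := by linarith
    simp only [hG, eval_sub, eval_pow, eval_mul, eval_C, h5, h6]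
    have hs' : (s : ℚ) ^ 2 = 1 := by exact_mod_cast hs
    linear_combination (-(eval (x : ℚ) Q) ^ 2 * (y x : ℚ) ^ 2) * hs'
  have hsub : T.image (fun x : ℤ => (x : ℚ)) ⊆ G.roots.toFinset := by
    intro q hq
    obtain ⟨x, hx, rfl⟩ := Finset.mem_image.1 hq
    rw [Multiset.mem_toFinset, mem_roots hG0]
    exact hroot x hx
  calc T.card = (T.image (fun x : ℤ => (x : ℚ))).card :=
        (Finset.card_image_of_injective _ Int.cast_injective).symm
    _ ≤ G.roots.toFinset.card := Finset.card_le_card hsub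
    _ ≤ Multiset.card G.roots := Multiset.toFinset_card_le _
    _ ≤ G.natDegree := card_roots' G
    _ ≤ _ := hGd
end

section
open Polynomial

lemma bp_trivial_class (p : ℕ) (hp : 0 < p) (B : ℝ) (hB : 0 ≤ B) (T : Finset ℤ) (r : ℤ)
    (hT : ∀ x ∈ T, |(x : ℝ)| ≤ B ∧ (x : ℤ) % p = r) : (T.card : ℝ) ≤ 2 * B / p + 2 := by
  have hp' : (0 : ℝ) < p := by exact_mod_cast hp
  have h1 : T.card ≤ (Finset.Icc ⌊-B / p⌋ ⌊B / p⌋).card := by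
    refine Finset.card_le_card_of_injOn (fun x => x / (p : ℤ)) ?_ ?_
    · intro x hx
      obtain ⟨h, -⟩ := hT x hx
      rw [abs_le] at h
      have e : x / (p : ℤ) = ⌊(x : ℝ) / p⌋ := by
        have := Rat.floor_intCast_div_natCast x p
        rw [← this, ← Rat.floor_cast (α := ℝ)]; push_cast; rfl
      simp only [Finset.coe_Icc, Set.mem_Icc, e]
      constructor
      · apply Int.floor_le_floor; gcongr; exact h.1
      · apply Int.floor_le_floor; gcongr; exact h.2
    · intro x hx y hy hxy
      have h1 := (hT x hx).2
      have h2 := (hT y hy).2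
      simp only at hxy
      rw [← Int.mul_ediv_add_emod x p, ← Int.mul_ediv_add_emod y p, h1, h2, hxy]
  have h2 : ((Finset.Icc ⌊-B / p⌋ ⌊B / p⌋).card : ℝ) ≤ 2 * B / p + 2 := by
    rw [Int.card_Icc]
    have a1 : ⌊-B / p⌋ ≤ ⌊B / p⌋ := by apply Int.floor_le_floor; gcongr; linarith
    have : ((⌊B / p⌋ + 1 - ⌊-B / p⌋).toNat : ℝ) = (⌊B / p⌋ : ℝ) + 1 - ⌊-B / p⌋ := by
      have h : ((⌊B / p⌋ + 1 - ⌊-B / p⌋).toNat : ℤ) = ⌊B / p⌋ + 1 - ⌊-B / p⌋ :=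
        Int.toNat_of_nonneg (by linarith)
      exact_mod_cast congrArg (fun z : ℤ => (z : ℝ)) h
    rw [this]
    have b1 := Int.floor_le (B / p)
    have b2 := Int.lt_floor_add_one (-B / p)
    have : 2 * B / p = B / p - (-B / p) := by ring
    linarith
  exact le_trans (by exact_mod_cast h1) h2

lemma bp_good_class (f : ℤ[X]) (s : ℤ) (p : ℕ) (hp : p.Prime) (hp2 : 2 < p) (M : ℕ) (B Y : ℝ)
    (hs : s ^ 2 = 1) (T : Finset ℤ) (r : ZMod p)
    (hr : (f.map (Int.castRingHom (ZMod p))).eval r ≠ 0)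
    (hT : ∀ x ∈ T, |(x : ℝ)| ≤ B ∧ (∃ y : ℤ, |(y : ℝ)| ≤ Y ∧ f.eval x = s * y ^ 2) ∧ (x : ZMod p) = r)
    (hsize : ((2 * M).factorial : ℝ) * (B ^ (M * (M - 1)) * Y ^ M) < (p : ℝ) ^ (M * (2 * M - 1)))
    (hns : ∀ P Q : ℚ[X], P ^ 2 = C (s : ℚ) * f.map (Int.castRingHom ℚ) * Q ^ 2 → Q = 0) :
    T.card ≤ 2 * M + f.natDegree := by
  classical
  rcases T.eq_empty_or_nonempty with rfl | ⟨a, ha⟩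
  · simp
  obtain ⟨-, ⟨b, -, hab⟩, har⟩ := hT a ha
  have hpZ : Prime (p : ℤ) := Nat.prime_iff_prime_int.1 hp
  have hfa : ¬ (p : ℤ) ∣ f.eval a := by
    intro h
    apply hr
    rw [← har, eval_intCast_map, Int.cast_id]
    exact (ZMod.intCast_zmod_eq_zero_iff_dvd _ _).2 h
  have hsp : ¬ (p : ℤ) ∣ s := fun h => hfa (by rw [hab]; exact h.mul_right _)
  have hbp : ¬ (p : ℤ) ∣ b := fun h => hfa (by rw [hab]; exact (h.pow two_ne_zero).mul_left _)
  have h2p : ¬ (p : ℤ) ∣ 2 := fun h => by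
    have := Int.le_of_dvd (by norm_num) h
    omega
  have hcop : IsCoprime (2 * s * b) (p : ℤ) := by
    refine ((hpZ.coprime_iff_not_dvd).2 ?_).symm
    intro h
    rcases hpZ.dvd_or_dvd h with h | h
    · rcases hpZ.dvd_or_dvd h with h | h
      · exact h2p h
      · exact hsp h
    · exact hbp h
  have hxa : ∀ x ∈ T, (p : ℤ) ∣ x - a := by
    intro x hx
    have := (hT x hx).2.2
    rw [← har] at this
    exact (ZMod.intCast_eq_intCast_iff_dvd_sub a x p).1 this.symm
  have hy : ∀ x : ℤ, ∃ y : ℤ, x ∈ T → |(y : ℝ)| ≤ Y ∧ f.eval x = s * y ^ 2 ∧ (p : ℤ) ∣ y - b := by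
    intro x
    by_cases hx : x ∈ T
    swap
    · exact ⟨0, fun h => absurd h hx⟩
    obtain ⟨-, ⟨y, hyY, hxy⟩, -⟩ := hT x hx
    have h1 : (p : ℤ) ∣ f.eval x - f.eval a := dvd_trans (hxa x hx) (sub_dvd_eval_sub _ _ _)
    rw [hxy, hab, ← mul_sub, sq_sub_sq] at h1
    rcases (hpZ.dvd_or_dvd h1) with h | h
    · exact absurd h hsp
    rcases (hpZ.dvd_or_dvd h) with h | h
    · refine ⟨-y, fun _ => ⟨by simpa using hyY, by simpa using hxy, ?_⟩⟩
      rw [← neg_add', dvd_neg]; exact h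
    · exact ⟨y, fun _ => ⟨hyY, hxy, h⟩⟩
  choose y hy using hy
  refine bp_class f s a b p M B Y hs hcop (by rw [hab]; simp) T y (fun x hx => ?_) (by exact_mod_cast hsize) hns
  obtain ⟨h1, h2, h3⟩ := hy x hx
  exact ⟨(hT x hx).1, h1, h2, hxa x hx, h3⟩

theorem bp_main (n : ℕ) (δ : ℝ) (hδ : 0 < δ) (hδ2 : δ ≤ 1 / 2) :
    ∃ A : ℝ, 0 < A ∧ ∀ (B : ℝ), 1 ≤ B → ∀ (f : ℤ[X]), f.Monic → f.natDegree = n →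
      ∀ s : ℤ, s ^ 2 = 1 →
      (∀ P Q : ℚ[X], P ^ 2 = C (s : ℚ) * f.map (Int.castRingHom ℚ) * Q ^ 2 → Q = 0) →
      (∀ x : ℤ, |(x : ℝ)| ≤ B → |((f.eval x : ℤ) : ℝ)| ≤ (2 * B) ^ n) →
      ∀ T : Finset ℤ, (∀ x ∈ T, |(x : ℝ)| ≤ B ∧ ∃ y : ℤ, f.eval x = s * y ^ 2) →
      (T.card : ℝ) ≤ A * B ^ (1 / 2 + δ) := by
  classical
  obtain ⟨M, hM1, hM⟩ : ∃ M : ℕ, 1 ≤ M ∧ (n : ℝ) ≤ 4 * δ * M := by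
    obtain ⟨M, hM⟩ := exists_nat_ge ((n : ℝ) / (4 * δ))
    refine ⟨M + 1, by omega, ?_⟩
    rw [div_le_iff₀ (by positivity)] at hM
    push_cast
    nlinarith
  set A : ℝ := ((2 * M).factorial : ℝ) * 2 ^ (n * M) + 2 with hA
  have hA2 : 2 ≤ A := by
    have : (0 : ℝ) ≤ ((2 * M).factorial : ℝ) * 2 ^ (n * M) := by positivity
    linarith
  refine ⟨4 * A * (2 * M + n) + 4 * n + 1, by positivity, ?_⟩
  intro B hB f hf hfn s hs hns hfB T hT
  have hB0 : 0 < B := by linarith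
  set Z := B ^ (1 / 2 + δ) with hZ
  have hZ1 : 1 ≤ Z := Real.one_le_rpow hB (by linarith)
  obtain ⟨p, hp, hqp, hpq⟩ := Nat.exists_prime_lt_and_le_two_mul ⌈A * Z⌉₊ (by
    have : 0 < ⌈A * Z⌉₊ := Nat.ceil_pos.2 (by positivity)
    omega)
  have hAZp : A * Z < p := lt_of_le_of_lt (Nat.le_ceil _) (by exact_mod_cast hqp)
  have hpAZ : (p : ℝ) ≤ 4 * A * Z := by
    have h1 : (⌈A * Z⌉₊ : ℝ) < A * Z + 1 := Nat.ceil_lt_add_one (by positivity)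
    have h2 : (p : ℝ) ≤ 2 * ⌈A * Z⌉₊ := by exact_mod_cast hpq
    nlinarith
  have hp2 : 2 < p := by
    have : (2 : ℝ) < p := by nlinarith
    exact_mod_cast this
  have : Fact p.Prime := ⟨hp⟩
  set Y : ℝ := (2 * B) ^ ((n : ℝ) / 2) with hY
  have hY0 : 0 < Y := by positivity
  have hYsq : Y ^ 2 = (2 * B) ^ n := by
    rw [hY, ← Real.rpow_natCast, ← Real.rpow_mul (by positivity), ← Real.rpow_natCast]
    congr 1; push_cast; ring
  have hsize : ((2 * M).factorial : ℝ) * (B ^ (M * (M - 1)) * Y ^ M) < (p : ℝ) ^ (M * (2 * M - 1)) := by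
    have hYM : Y ^ M ≤ 2 ^ (n * M) * B ^ ((n : ℝ) * M / 2) := by
      rw [hY, ← Real.rpow_natCast, ← Real.rpow_mul (by positivity), Real.mul_rpow (by norm_num) hB0.le,
        ← Real.rpow_natCast 2 (n * M)]
      have e : (n : ℝ) / 2 * M = n * M / 2 := by ring
      rw [e]
      gcongr
      · norm_num
      · push_cast
        have : (0 : ℝ) ≤ n * M := by positivity
        linarith
    have hBM : B ^ (M * (M - 1)) = B ^ ((M : ℝ) * (M - 1)) := by
      rw [← Real.rpow_natCast]; congr 1; push_cast [Nat.cast_sub hM1]; ring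
    have hMr : (1 : ℝ) ≤ M := by exact_mod_cast hM1
    have hexp : (M : ℝ) * (M - 1) + n * M / 2 ≤ (1 / 2 + δ) * (M * (2 * M - 1)) := by
      have h1 : (n : ℝ) * M ≤ 4 * δ * M * M := by gcongr
      nlinarith [mul_le_mul_of_nonneg_right hδ2 (by linarith : (0 : ℝ) ≤ M)]
    calc ((2 * M).factorial : ℝ) * (B ^ (M * (M - 1)) * Y ^ M)
        ≤ ((2 * M).factorial : ℝ) * (B ^ ((M : ℝ) * (M - 1)) * (2 ^ (n * M) * B ^ ((n : ℝ) * M / 2))) := by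
          rw [hBM]; gcongr
      _ = (((2 * M).factorial : ℝ) * 2 ^ (n * M)) * B ^ ((M : ℝ) * (M - 1) + n * M / 2) := by
          rw [Real.rpow_add hB0]; ring
      _ ≤ (((2 * M).factorial : ℝ) * 2 ^ (n * M)) * B ^ ((1 / 2 + δ) * (M * (2 * M - 1))) := by
          gcongr
      _ < A * B ^ ((1 / 2 + δ) * (M * (2 * M - 1))) := by
          gcongr
          linarith
      _ ≤ A ^ (M * (2 * M - 1)) * Z ^ (M * (2 * M - 1)) := by
          gcongr
          · exact le_self_pow₀ (by linarith) (by
              have : 1 ≤ M * (2 * M - 1) := Nat.mul_pos hM1 (by omega)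
              omega)
          · rw [hZ, ← Real.rpow_natCast, ← Real.rpow_mul hB0.le]
            apply le_of_eq
            congr 2
            push_cast [Nat.cast_sub (by omega : 1 ≤ 2 * M)]
            ring
      _ = (A * Z) ^ (M * (2 * M - 1)) := (mul_pow _ _ _).symm
      _ ≤ (p : ℝ) ^ (M * (2 * M - 1)) := by gcongr
  set F := f.map (Int.castRingHom (ZMod p)) with hF
  have hFm : F.Monic := hf.map _
  have hroots : (Finset.univ.filter fun r : ZMod p => F.eval r = 0).card ≤ n := by
    have : (Finset.univ.filter fun r : ZMod p => F.eval r = 0) ⊆ F.roots.toFinset := by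
      intro r hr
      rw [Multiset.mem_toFinset, mem_roots hFm.ne_zero]
      exact (Finset.mem_filter.1 hr).2
    refine (Finset.card_le_card this).trans ((Multiset.toFinset_card_le _).trans ((card_roots' F).trans ?_))
    rw [hF, hf.natDegree_map, hfn]
  have hcard : T.card = ∑ r : ZMod p, (T.filter fun x : ℤ => (x : ZMod p) = r).card :=
    Finset.card_eq_sum_card_fiberwise fun x _ => Finset.mem_coe.2 (Finset.mem_univ _)
  have hBp : B / p ≤ Z := by
    rw [div_le_iff₀ (by positivity)]
    have h1 : Z * Z ≤ Z * p := by gcongr; nlinarith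
    have h2 : B ≤ Z * Z := by
      rw [hZ, ← Real.rpow_add hB0]
      calc B = B ^ (1 : ℝ) := (Real.rpow_one B).symm
        _ ≤ _ := Real.rpow_le_rpow_of_exponent_le hB (by linarith)
    linarith
  have hbound : ∀ r : ZMod p, ((T.filter fun x : ℤ => (x : ZMod p) = r).card : ℝ) ≤
      (2 * M + n) + if F.eval r = 0 then 2 * B / p + 2 else 0 := by
    intro r
    split_ifs with hr
    · have := bp_trivial_class p hp.pos B hB0.le (T.filter fun x : ℤ => (x : ZMod p) = r) (r.val : ℤ) (by
        intro x hx
        obtain ⟨hx1, hx2⟩ := Finset.mem_filter.1 hx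
        refine ⟨(hT x hx1).1, ?_⟩
        rw [← hx2, ZMod.val_intCast])
      have h0 : (0 : ℝ) ≤ 2 * M + n := by positivity
      linarith
    · have := bp_good_class f s p hp hp2 M B Y hs (T.filter fun x : ℤ => (x : ZMod p) = r) r hr (by
        intro x hx
        obtain ⟨hx1, hx2⟩ := Finset.mem_filter.1 hx
        obtain ⟨h1, y, hy⟩ := hT x hx1
        refine ⟨h1, ⟨y, ?_, hy⟩, hx2⟩
        have h2 := hfB x h1
        rw [hy, ← hYsq] at h2
        apply abs_le_of_sq_le_sq _ hY0.le
        refine le_trans (le_of_eq ?_) h2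
        push_cast
        have hs' : |(s : ℝ)| = 1 := by
          have : ((s : ℝ)) ^ 2 = 1 := by exact_mod_cast hs
          rcases sq_eq_one_iff.1 this with h | h <;> simp [h]
        rw [abs_mul, hs', one_mul, abs_sq]) hsize hns
      rw [hfn] at this
      rw [add_zero]
      exact_mod_cast this
  calc (T.card : ℝ) = ∑ r : ZMod p, ((T.filter fun x : ℤ => (x : ZMod p) = r).card : ℝ) := by
        rw [hcard]; push_cast; rfl
    _ ≤ ∑ r : ZMod p, ((2 * M + n : ℝ) + if F.eval r = 0 then 2 * B / p + 2 else 0) :=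
        Finset.sum_le_sum fun r _ => hbound r
    _ = p * (2 * M + n) + (Finset.univ.filter fun r : ZMod p => F.eval r = 0).card * (2 * B / p + 2) := by
        rw [Finset.sum_add_distrib, ← Finset.sum_filter]
        simp [ZMod.card]
        ring
    _ ≤ (4 * A * Z) * (2 * M + n) + n * (2 * Z + 2 * Z) := by
        gcongr
        · rw [mul_div_assoc]; gcongr
        · linarith
    _ ≤ _ := by nlinarith
end

section
open MeasureTheory
open scoped Pointwise

lemma fc_cos_zero {V : Type*} [NormedAddCommGroup V] [NormedSpace ℝ V] [MeasurableSpace V]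
    [BorelSpace V] (μ : Measure V) [μ.IsAddLeftInvariant]
    (Γ : AddSubgroup V) [Countable Γ] (F : Set V) (hF : IsAddFundamentalDomain Γ F μ)
    (ℓ : V →L[ℝ] ℝ) (hℓ : ℓ ≠ 0) (hint : ∀ γ ∈ Γ, ∃ m : ℤ, ℓ γ = m) :
    ∫ t in F, Real.cos (2 * Real.pi * ℓ t) ∂μ = 0 := by
  obtain ⟨v, hv⟩ : ∃ v, ℓ v ≠ 0 := by
    by_contra h
    push Not at h
    exact hℓ (ContinuousLinearMap.ext h)
  set s : V := (1 / (2 * ℓ v)) • v with hs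
  have hls : ℓ s = 1 / 2 := by
    rw [hs, map_smul, smul_eq_mul]; field_simp
  have hF2 : IsAddFundamentalDomain Γ (s +ᵥ F) μ := hF.vadd_of_comm s
  have h1 := hF.setIntegral_eq hF2 (f := fun t => Real.cos (2 * Real.pi * ℓ t)) (by
    intro g x
    obtain ⟨m, hm⟩ := hint g g.2
    have : ℓ (g +ᵥ x) = m + ℓ x := by
      change ℓ ((g : V) + x) = _
      rw [map_add, hm]
    simp only [this]
    rw [show 2 * Real.pi * ((m : ℝ) + ℓ x) = 2 * Real.pi * ℓ x + m * (2 * Real.pi) by ring]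
    exact Real.cos_add_int_mul_two_pi _ _)
  have h2 : ∫ t in s +ᵥ F, Real.cos (2 * Real.pi * ℓ t) ∂μ
      = ∫ t in F, Real.cos (2 * Real.pi * ℓ (s + t)) ∂μ := by
    have := (measurePreserving_add_left μ s).setIntegral_image_emb
      (measurableEmbedding_addLeft s) (fun t => Real.cos (2 * Real.pi * ℓ t)) F
    exact this
  have h3 : ∀ t, Real.cos (2 * Real.pi * ℓ (s + t)) = - Real.cos (2 * Real.pi * ℓ t) := by
    intro t
    rw [map_add, hls, show 2 * Real.pi * (1 / 2 + ℓ t) = 2 * Real.pi * ℓ t + Real.pi by ring]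
    exact Real.cos_add_pi _
  rw [h2] at h1
  simp only [h3] at h1
  rw [integral_neg] at h1
  linarith

theorem fc_count {V : Type*} [NormedAddCommGroup V] [NormedSpace ℝ V] [MeasurableSpace V]
    [BorelSpace V] (μ : Measure V) [μ.IsAddLeftInvariant]
    (Γ : AddSubgroup V) [Countable Γ] (F : Set V) (hF : IsAddFundamentalDomain Γ F μ)
    (hFfin : μ F ≠ ⊤) {ι : Type*} (S : Finset ι) (ℓ : ι → V →L[ℝ] ℝ)
    (hinj : ∀ i ∈ S, ∀ j ∈ S, ℓ i = ℓ j → i = j)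
    (hint : ∀ i ∈ S, ∀ γ ∈ Γ, ∃ m : ℤ, ℓ i γ = m)
    (U : Set V) (hU : MeasurableSet U) (hUs : ∀ i ∈ S, ∀ u ∈ U, |ℓ i u| ≤ 1 / 8)
    (hUd : ∀ u ∈ U, ∀ u' ∈ U, ∀ γ ∈ Γ, u = γ + u' → γ = 0) :
    (S.card : ℝ) * (μ U).toReal ≤ 2 * (μ F).toReal := by
  have hUF : μ U ≤ μ F := by
    refine hF.measure_le_of_pairwise_disjoint hU.nullMeasurableSet ?_
    intro g g' hg
    refine Disjoint.aedisjoint ?_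
    rw [Set.disjoint_left]
    rintro x ⟨hx, _⟩ ⟨hx', _⟩
    obtain ⟨u, hu, rfl⟩ := hx
    obtain ⟨u', hu', h⟩ := hx'
    apply hg
    have h' : (g' : V) + u' = (g : V) + u := h
    have := hUd u hu u' hu' ((g' : V) - g) (Γ.sub_mem g'.2 g.2) (by rw [sub_add_eq_add_sub, h']; abel)
    exact (Subtype.ext (sub_eq_zero.mp this)).symm
  have hUfin : μ U ≠ ⊤ := ne_top_of_le_ne_top hFfin hUF
  rcases S.eq_empty_or_nonempty with hS | hS
  · subst hS; simp
  have hScard : (0 : ℝ) < S.card := by exact_mod_cast hS.card_pos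
  set h : V → ℝ := fun t => (∑ i ∈ S, Real.cos (2 * Real.pi * ℓ i t)) ^ 2
    + (∑ i ∈ S, Real.sin (2 * Real.pi * ℓ i t)) ^ 2 with hh
  have hcont : Continuous h := by rw [hh]; fun_prop
  have hnn : ∀ t, 0 ≤ h t := fun t => by rw [hh]; positivity
  have hbd : ∀ t, ‖h t‖ ≤ (S.card : ℝ) ^ 2 + (S.card : ℝ) ^ 2 := by
    intro t
    rw [Real.norm_of_nonneg (hnn t), hh]
    have h1 : |∑ i ∈ S, Real.cos (2 * Real.pi * ℓ i t)| ≤ S.card := by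
      refine (Finset.abs_sum_le_sum_abs _ _).trans ?_
      refine (Finset.sum_le_sum (fun i _ => Real.abs_cos_le_one _)).trans ?_
      simp
    have h2 : |∑ i ∈ S, Real.sin (2 * Real.pi * ℓ i t)| ≤ S.card := by
      refine (Finset.abs_sum_le_sum_abs _ _).trans ?_
      refine (Finset.sum_le_sum (fun i _ => Real.abs_sin_le_one _)).trans ?_
      simp
    exact add_le_add (sq_le_sq' (abs_le.mp h1).1 (abs_le.mp h1).2)
      (sq_le_sq' (abs_le.mp h2).1 (abs_le.mp h2).2)
  have hexp : ∀ t, h t = ∑ i ∈ S, ∑ j ∈ S, Real.cos (2 * Real.pi * (ℓ i - ℓ j) t) := by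
    intro t
    rw [hh]
    simp only [sq, Finset.sum_mul_sum, ← Finset.sum_add_distrib]
    refine Finset.sum_congr rfl fun i _ => Finset.sum_congr rfl fun j _ => ?_
    rw [sub_apply, mul_sub, Real.cos_sub]
  have hintF : ∀ f : V → ℝ, Continuous f → ∀ M, (∀ t, ‖f t‖ ≤ M) → IntegrableOn f F μ := by
    intro f hf M hM
    exact Measure.integrableOn_of_bounded hFfin hf.measurable.aestronglyMeasurable
      (Filter.Eventually.of_forall hM)
  have hFI : ∫ t in F, h t ∂μ = S.card * (μ F).toReal := by
    simp only [hexp]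
    have hi : ∀ i j, IntegrableOn (fun t => Real.cos (2 * Real.pi * (ℓ i - ℓ j) t)) F μ := by
      intro i j
      refine hintF _ (by fun_prop) 1 (fun t => Real.abs_cos_le_one _)
    rw [integral_finsetSum _ (fun i _ => integrable_finsetSum _ (fun j _ => hi i j))]
    have : ∀ i ∈ S, ∫ t in F, ∑ j ∈ S, Real.cos (2 * Real.pi * (ℓ i - ℓ j) t) ∂μ
        = (μ F).toReal := by
      intro i hiS
      rw [integral_finsetSum _ (fun j _ => hi i j), Finset.sum_eq_single i]
      · simp [Measure.real]
      · intro j hj hji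
        refine fc_cos_zero μ Γ F hF _ (fun h0 => hji (hinj j hj i hiS ?_)) ?_
        · exact (sub_eq_zero.mp h0).symm
        · intro γ hγ
          obtain ⟨a, ha⟩ := hint i hiS γ hγ
          obtain ⟨b, hb⟩ := hint j hj γ hγ
          exact ⟨a - b, by rw [sub_apply, ha, hb]; push_cast; ring⟩
      · intro h; exact absurd hiS h
    rw [Finset.sum_congr rfl this]
    simp
  have hinv : ∀ (g : Γ) (x : V), h (g +ᵥ x) = h x := by
    intro g x
    rw [hexp, hexp]
    refine Finset.sum_congr rfl fun i hi => Finset.sum_congr rfl fun j hj => ?_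
    obtain ⟨a, ha⟩ := hint i hi g g.2
    obtain ⟨b, hb⟩ := hint j hj g g.2
    have : (ℓ i - ℓ j) (g +ᵥ x) = ((a - b : ℤ) : ℝ) + (ℓ i - ℓ j) x := by
      change (ℓ i - ℓ j) ((g : V) + x) = _
      rw [map_add, sub_apply, ha, hb]; push_cast; ring
    rw [this, show 2 * Real.pi * (((a - b : ℤ) : ℝ) + (ℓ i - ℓ j) x)
      = 2 * Real.pi * (ℓ i - ℓ j) x + (a - b : ℤ) * (2 * Real.pi) by ring]
    exact Real.cos_add_int_mul_two_pi _ _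
  -- lintegral comparison
  have hle : ∫⁻ t in U, ENNReal.ofReal (h t) ∂μ ≤ ∫⁻ t in F, ENNReal.ofReal (h t) ∂μ := by
    rw [hF.setLIntegral_eq_tsum' (fun t => ENNReal.ofReal (h t)) U]
    simp only [hinv]
    have hmeas : ∀ g : Γ, NullMeasurableSet (g +ᵥ U) μ := fun g => 
      (hU.const_vadd g).nullMeasurableSet
    have hdis : Pairwise fun g g' : Γ => Disjoint (g +ᵥ U) (g' +ᵥ U) := by
      intro g g' hg
      rw [Set.disjoint_left]
      rintro x hx hx'
      obtain ⟨u, hu, rfl⟩ := hx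
      obtain ⟨u', hu', h⟩ := hx'
      apply hg
      have h' : (g' : V) + u' = (g : V) + u := h
      have := hUd u hu u' hu' ((g' : V) - g) (Γ.sub_mem g'.2 g.2) (by rw [sub_add_eq_add_sub, h']; abel)
      exact (Subtype.ext (sub_eq_zero.mp this)).symm
    have e1 : ∀ g : Γ, ∫⁻ x in (g +ᵥ U) ∩ F, ENNReal.ofReal (h x) ∂μ
        = ∫⁻ x in g +ᵥ U, ENNReal.ofReal (h x) ∂(μ.restrict F) := by
      intro g
      rw [Measure.restrict_restrict (hU.const_vadd g)]
    simp only [e1]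
    rw [← lintegral_iUnion (fun g => hU.const_vadd g) hdis]
    exact setLIntegral_le_lintegral _ _
  have hFh : ∫⁻ t in F, ENNReal.ofReal (h t) ∂μ = ENNReal.ofReal (S.card * (μ F).toReal) := by
    rw [← hFI, ofReal_integral_eq_lintegral_ofReal (hintF h hcont _ hbd)
      (Filter.Eventually.of_forall hnn)]
  have hlow : ENNReal.ofReal ((S.card : ℝ) ^ 2 / 2) * μ U ≤ ∫⁻ t in U, ENNReal.ofReal (h t) ∂μ := by
    rw [← setLIntegral_const]
    refine setLIntegral_mono' hU (fun t ht => ENNReal.ofReal_le_ofReal ?_)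
    have h1 : (S.card : ℝ) * (√2 / 2) ≤ ∑ i ∈ S, Real.cos (2 * Real.pi * ℓ i t) := by
      rw [← nsmul_eq_mul]
      refine Finset.card_nsmul_le_sum _ _ _ (fun i hi => ?_)
      rw [← Real.cos_pi_div_four, ← Real.cos_abs (2 * Real.pi * ℓ i t)]
      have hb := hUs i hi t ht
      have hpi := Real.pi_pos
      have habs : |2 * Real.pi * ℓ i t| ≤ Real.pi / 4 := by
        rw [abs_mul, abs_of_pos (by positivity : (0 : ℝ) < 2 * Real.pi)]
        nlinarith
      exact Real.cos_le_cos_of_nonneg_of_le_pi (abs_nonneg _) (by linarith) habs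
    have h2 : (S.card : ℝ) ^ 2 / 2 = ((S.card : ℝ) * (√2 / 2)) ^ 2 := by
      rw [mul_pow, div_pow, Real.sq_sqrt (by norm_num)]; ring
    rw [h2, hh]
    have h3 := pow_le_pow_left₀ (by positivity) h1 2
    have h4 := sq_nonneg (∑ i ∈ S, Real.sin (2 * Real.pi * ℓ i t))
    simp only
    linarith
  have hfin := (hlow.trans hle).trans hFh.le
  rw [← ENNReal.ofReal_toReal hUfin, ← ENNReal.ofReal_mul (by positivity)] at hfin
  rw [ENNReal.ofReal_le_ofReal_iff (by positivity)] at hfin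
  have : (S.card : ℝ) * ((S.card : ℝ) * (μ U).toReal) ≤ S.card * (2 * (μ F).toReal) := by linarith
  exact le_of_mul_le_mul_left this hScard
end

section
open NumberField MeasureTheory

open Classical in
lemma tr_formula (K : Type*) [Field K] [NumberField K] (x : K) :
    ((Algebra.trace ℚ K x : ℚ) : ℝ) = ∑ w : InfinitePlace K, (w.mult : ℝ) * (w.embedding x).re := by
  have h0 : (Algebra.trace ℚ K x : ℂ) = ∑ φ : K →+* ℂ, φ x := by
    have := trace_eq_sum_embeddings ℂ (K := ℚ) (L := K) (x := x)
    rw [eq_ratCast] at this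
    rw [this, ← Fintype.sum_equiv (RingHom.equivRatAlgHom K ℂ) (fun f => f x)
      (fun φ => φ x) fun _ => by simp [RingHom.equivRatAlgHom_apply]]
  have h1 : ((Algebra.trace ℚ K x : ℚ) : ℝ) = ∑ φ : K →+* ℂ, (φ x).re := by
    have := congrArg Complex.re h0
    rw [Complex.re_sum] at this
    rw [← this]; simp
  rw [h1, ← Finset.sum_fiberwise Finset.univ InfinitePlace.mk]
  refine Finset.sum_congr rfl fun w _ => ?_
  have : ∀ φ ∈ ({φ | InfinitePlace.mk φ = w} : Finset (K →+* ℂ)), (φ x).re = (w.embedding x).re := by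
    intro φ hφ
    have h2 := (Finset.mem_filter.mp hφ).2
    rw [← InfinitePlace.mk_embedding w, InfinitePlace.mk_eq_iff] at h2
    rcases h2 with h2 | h2
    · rw [h2]
    · rw [← h2]; simp [ComplexEmbedding.conjugate]
  rw [Finset.sum_congr rfl this, Finset.sum_const, InfinitePlace.card_filter_mk_eq, nsmul_eq_mul]

open Classical in
noncomputable def trFun (K : Type*) [Field K] [NumberField K] (a : K) :
    mixedEmbedding.mixedSpace K →L[ℝ] ℝ :=
  (∑ w : {w : InfinitePlace K // w.IsReal}, (InfinitePlace.embedding_of_isReal w.2 a) •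
    (ContinuousLinearMap.proj (R := ℝ) (φ := fun _ : {w : InfinitePlace K // w.IsReal} => ℝ) w).comp
      (ContinuousLinearMap.fst ℝ _ _)) +
  (∑ w : {w : InfinitePlace K // w.IsComplex}, (2 : ℝ) •
    (Complex.reCLM.comp (ContinuousLinearMap.mul ℝ ℂ (w.1.embedding a))).comp
    ((ContinuousLinearMap.proj (R := ℝ) (φ := fun _ : {w : InfinitePlace K // w.IsComplex} => ℂ) w).comp
      (ContinuousLinearMap.snd ℝ _ _)))

open Classical in
lemma trFun_apply (K : Type*) [Field K] [NumberField K] (a : K) (t : mixedEmbedding.mixedSpace K) :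
    trFun K a t = ∑ w : {w : InfinitePlace K // w.IsReal},
      (InfinitePlace.embedding_of_isReal w.2 a) * t.1 w +
      ∑ w : {w : InfinitePlace K // w.IsComplex}, 2 * (w.1.embedding a * t.2 w).re := by
  simp [trFun]

open Classical in
lemma trFun_mixed (K : Type*) [Field K] [NumberField K] (a x : K) :
    trFun K a (mixedEmbedding K x) = ((Algebra.trace ℚ K (a * x) : ℚ) : ℝ) := by
  rw [trFun_apply, tr_formula, ← Fintype.sum_subtype_add_sum_subtype (fun w : InfinitePlace K => w.IsReal)]
  congr 1
  · refine Finset.sum_congr rfl fun w _ => ?_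
    rw [mixedEmbedding.mixedEmbedding_apply_isReal, ← map_mul, InfinitePlace.mult_isReal w,
      ← InfinitePlace.embedding_of_isReal_apply w.2, Nat.cast_one, one_mul, Complex.ofReal_re]
  · refine Fintype.sum_equiv (Equiv.subtypeEquivRight (fun w => InfinitePlace.not_isReal_iff_isComplex.symm)) _ _ (fun w => ?_)
    rw [mixedEmbedding.mixedEmbedding_apply_isComplex, ← map_mul]
    simp [InfinitePlace.mult_isComplex w]

open Classical in
lemma trFun_bound (K : Type*) [Field K] [NumberField K] (a : K) (R r : ℝ) (hR : 0 ≤ R)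
    (ha : ∀ w : InfinitePlace K, w a ≤ R) (t : mixedEmbedding.mixedSpace K)
    (h1 : ∀ w, ‖t.1 w‖ ≤ r) (h2 : ∀ w, ‖t.2 w‖ ≤ r) :
    |trFun K a t| ≤ Module.finrank ℚ K * (R * r) := by
  have hsum : (Module.finrank ℚ K : ℝ) * (R * r)
      = ∑ w : InfinitePlace K, (w.mult : ℝ) * (R * r) := by
    rw [← Finset.sum_mul, ← InfinitePlace.sum_mult_eq]; push_cast; rfl
  rw [trFun_apply, hsum, ← Fintype.sum_subtype_add_sum_subtype (fun w : InfinitePlace K => w.IsReal)]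
  refine (abs_add_le _ _).trans (add_le_add ?_ ?_)
  · refine (Finset.abs_sum_le_sum_abs _ _).trans (Finset.sum_le_sum fun w _ => ?_)
    rw [InfinitePlace.mult_isReal w, Nat.cast_one, one_mul, abs_mul]
    refine mul_le_mul ?_ (h1 w) (abs_nonneg _) hR
    rw [← Real.norm_eq_abs, ← Complex.norm_real, InfinitePlace.embedding_of_isReal_apply,
      InfinitePlace.norm_embedding_eq]
    exact ha w
  · refine (Finset.abs_sum_le_sum_abs _ _).trans ?_
    rw [← Fintype.sum_equiv (Equiv.subtypeEquivRight (fun w : InfinitePlace K => InfinitePlace.not_isReal_iff_isComplex.symm)) (fun w => 2 * (R * r)) (fun w => (w.1.mult : ℝ) * (R * r)) (fun w => by 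
      have := InfinitePlace.mult_isComplex w
      simp [this])]
    refine Finset.sum_le_sum fun w _ => ?_
    rw [abs_mul, abs_two]
    refine mul_le_mul_of_nonneg_left ((Complex.abs_re_le_norm _).trans ?_) (by norm_num)
    rw [norm_mul]
    refine mul_le_mul ?_ (h2 w) (norm_nonneg _) hR
    rw [InfinitePlace.norm_embedding_eq]
    exact ha w

lemma norm_ge_of_mem (K : Type*) [Field K] [NumberField K]
    (I : FractionalIdeal (nonZeroDivisors (𝓞 K)) K) (hI : I ≠ 0) (x : K) (hx : x ∈ I) (hx0 : x ≠ 0) :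
    FractionalIdeal.absNorm I ≤ |Algebra.norm ℚ x| := by
  rw [← FractionalIdeal.absNorm_span_singleton (𝓞 K)]
  have h1 : FractionalIdeal.spanSingleton (nonZeroDivisors (𝓞 K)) x * I⁻¹ ≤ 1 := by
    rw [← mul_inv_cancel₀ hI]
    exact mul_le_mul_left (FractionalIdeal.spanSingleton_le_iff_mem.mpr hx) _
  obtain ⟨J, hJ⟩ := FractionalIdeal.le_one_iff_exists_coeIdeal.mp h1
  have h2 : FractionalIdeal.spanSingleton (nonZeroDivisors (𝓞 K)) x = J * I := by
    rw [hJ, mul_assoc, inv_mul_cancel₀ hI, mul_one]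
  have hs : FractionalIdeal.spanSingleton (nonZeroDivisors (𝓞 K)) x ≠ 0 := by
    rwa [Ne, FractionalIdeal.spanSingleton_eq_zero_iff]
  rw [h2, map_mul, FractionalIdeal.coeIdeal_absNorm]
  have h3 : Ideal.absNorm J ≠ 0 := by
    rw [Ne, Ideal.absNorm_eq_zero_iff]
    rintro rfl
    apply hs
    rw [h2]; simp
  have h4 : (1 : ℚ) ≤ Ideal.absNorm J := by exact_mod_cast Nat.one_le_iff_ne_zero.mpr h3
  exact le_mul_of_one_le_left (FractionalIdeal.absNorm_nonneg I) h4

open Classical in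
theorem lattice_count_K (K : Type*) [Field K] [NumberField K] (R r : ℝ) (hR : 0 ≤ R) (hr : 0 < r)
    (hrR : Module.finrank ℚ K * (R * r) ≤ 1 / 8)
    (hrD : (2 * r) ^ (Module.finrank ℚ K) * ((discr K).natAbs : ℝ) < 1)
    (S : Finset (𝓞 K)) (hS : ∀ a ∈ S, ∀ w : InfinitePlace K, w (a : K) ≤ R) :
    (S.card : ℝ) * r ^ (Module.finrank ℚ K) * √((discr K).natAbs : ℝ) ≤ 2 := by
  set D : ℝ := ((discr K).natAbs : ℝ) with hD
  have hD1 : 1 ≤ D := by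
    rw [hD]; exact_mod_cast Int.natAbs_pos.mpr (discr_ne_zero K)
  have hdual : FractionalIdeal.dual ℤ ℚ (1 : FractionalIdeal (nonZeroDivisors (𝓞 K)) K) ≠ 0 :=
    FractionalIdeal.dual_ne_zero ℤ ℚ one_ne_zero
  set I : (FractionalIdeal (nonZeroDivisors (𝓞 K)) K)ˣ := Units.mk0 _ hdual with hI
  have hIval : (I : FractionalIdeal (nonZeroDivisors (𝓞 K)) K) = FractionalIdeal.dual ℤ ℚ 1 := rfl
  have hnorm : FractionalIdeal.absNorm (I : FractionalIdeal (nonZeroDivisors (𝓞 K)) K)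
      = ((discr K).natAbs : ℚ)⁻¹ := by
    rw [← absNorm_differentIdeal K (𝓞 K), ← FractionalIdeal.coeIdeal_absNorm (K := K),
      coeIdeal_differentIdeal ℤ ℚ K (𝓞 K), map_inv₀, inv_inv, hIval]
  set F := ZSpan.fundamentalDomain (mixedEmbedding.fractionalIdealLatticeBasis K I) with hF
  have hfd : IsAddFundamentalDomain (Submodule.span ℤ (Set.range
      (mixedEmbedding.fractionalIdealLatticeBasis K I))).toAddSubgroup F volume :=
    ZSpan.isAddFundamentalDomain' (mixedEmbedding.fractionalIdealLatticeBasis K I) volume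
  have hcount : Countable (Submodule.span ℤ (Set.range
      (mixedEmbedding.fractionalIdealLatticeBasis K I))).toAddSubgroup := by
    change Countable (Submodule.span ℤ (Set.range
      (mixedEmbedding.fractionalIdealLatticeBasis K I)))
    infer_instance
  have hFvol : volume F = ENNReal.ofReal ((2⁻¹ : ℝ) ^ InfinitePlace.nrComplexPlaces K * (√D)⁻¹) := by
    rw [hF, mixedEmbedding.volume_fundamentalDomain_fractionalIdealLatticeBasis, hnorm,
      mixedEmbedding.volume_fundamentalDomain_latticeBasis]
    have e1 : (NNReal.sqrt ‖discr K‖₊ : ENNReal) = ENNReal.ofReal (√D) := by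
      rw [← ENNReal.ofReal_coe_nnreal, Real.coe_sqrt, coe_nnnorm, Int.norm_eq_abs, hD,
        Nat.cast_natAbs, Int.cast_abs]
    have e2 : (2⁻¹ : ENNReal) = ENNReal.ofReal (2⁻¹ : ℝ) := by
      rw [ENNReal.ofReal_inv_of_pos (by norm_num)]; simp
    rw [e1, e2, ← ENNReal.ofReal_pow (by norm_num), ← ENNReal.ofReal_mul (by positivity),
      ← ENNReal.ofReal_mul (by positivity)]
    congr 1
    have hs : √D * √D = D := Real.mul_self_sqrt (by linarith)
    have hs0 : 0 < √D := Real.sqrt_pos.mpr (by linarith)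
    push_cast
    rw [← hD]
    field_simp
    rw [sq, hs]
  have hFtop : volume F ≠ ⊤ := by rw [hFvol]; exact ENNReal.ofReal_ne_top
  set rr : NNReal := ⟨r, hr.le⟩ with hrr
  set U := mixedEmbedding.convexBodyLT K (fun _ => rr) with hU
  have hUmem : ∀ u ∈ U, (∀ w, ‖u.1 w‖ < r) ∧ (∀ w, ‖u.2 w‖ < r) := by
    intro u hu
    rw [hU, Set.mem_prod] at hu
    refine ⟨fun w => ?_, fun w => ?_⟩
    · exact mem_ball_zero_iff.mp (hu.1 w (Set.mem_univ w))
    · exact mem_ball_zero_iff.mp (hu.2 w (Set.mem_univ w))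
  have hUvol : ENNReal.ofReal (r ^ (Module.finrank ℚ K)) ≤ volume U := by
    rw [hU, mixedEmbedding.convexBodyLT_volume, Finset.prod_pow_eq_pow_sum,
      InfinitePlace.sum_mult_eq, ENNReal.ofReal_pow hr.le]
    have : ENNReal.ofReal r = (rr : ENNReal) := by
      rw [← ENNReal.ofReal_coe_nnreal]; rfl
    rw [this, ← ENNReal.coe_pow]
    refine ENNReal.coe_le_coe.mpr ?_
    exact le_mul_of_one_le_left (by positivity) (mixedEmbedding.one_le_convexBodyLTFactor K)
  have hUmeas : MeasurableSet U := by
    refine IsOpen.measurableSet ?_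
    refine IsOpen.prod ?_ ?_
    · exact isOpen_set_pi Set.finite_univ (fun _ _ => Metric.isOpen_ball)
    · exact isOpen_set_pi Set.finite_univ (fun _ _ => Metric.isOpen_ball)
  have key := fc_count volume _ F hfd hFtop S (fun a => trFun K (a : K)) ?_ ?_ U hUmeas ?_ ?_
  · have hUtop : volume U ≠ ⊤ := by
      rw [hU, mixedEmbedding.convexBodyLT_volume]
      exact ENNReal.coe_ne_top
    have h1 : r ^ (Module.finrank ℚ K) ≤ (volume U).toReal :=
      (ENNReal.ofReal_le_iff_le_toReal hUtop).mp hUvol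
    have h2 : (volume F).toReal ≤ (√D)⁻¹ := by
      rw [hFvol, ENNReal.toReal_ofReal (by positivity)]
      exact mul_le_of_le_one_left (by positivity) (pow_le_one₀ (by norm_num) (by norm_num))
    have hs0 : 0 < √D := Real.sqrt_pos.mpr (by linarith)
    have h3 : (S.card : ℝ) * r ^ (Module.finrank ℚ K) ≤ 2 * (√D)⁻¹ :=
      (mul_le_mul_of_nonneg_left h1 (by positivity)).trans (key.trans (by linarith))
    calc _ ≤ 2 * (√D)⁻¹ * √D := mul_le_mul_of_nonneg_right h3 hs0.le
      _ = 2 := by field_simp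
  · intro a _ b _ hab
    have h1 : ∀ x : K, Algebra.trace ℚ K ((a - b : K) * x) = 0 := by
      intro x
      have := congrArg (fun f => f (mixedEmbedding K x)) hab
      simp only [trFun_mixed] at this
      rw [sub_mul, map_sub, sub_eq_zero]
      exact_mod_cast this
    have h2 : (a - b : K) = 0 := by
      refine (traceForm_nondegenerate ℚ K).1 _ (fun x => ?_)
      rw [Algebra.traceForm_apply]; exact h1 x
    exact RingOfIntegers.ext (sub_eq_zero.mp h2)
  · intro a _ γ hγ
    rw [Submodule.mem_toAddSubgroup, mixedEmbedding.mem_span_fractionalIdealLatticeBasis] at hγ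
    obtain ⟨x, hx, rfl⟩ := hγ
    have := (FractionalIdeal.mem_dual (A := ℤ) (K := ℚ) (I := (1 : FractionalIdeal (nonZeroDivisors (𝓞 K)) K)) one_ne_zero).mp hx (a : K)
      ((FractionalIdeal.mem_one_iff _).mpr ⟨a, rfl⟩)
    obtain ⟨m, hm⟩ := this
    refine ⟨m, ?_⟩
    rw [trFun_mixed, mul_comm, ← Algebra.traceForm_apply, ← hm]
    simp
  · intro a ha u hu
    obtain ⟨h1, h2⟩ := hUmem u hu
    exact (trFun_bound K a R r hR (hS a ha) u (fun w => (h1 w).le) (fun w => (h2 w).le)).trans hrR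
  · intro u hu u' hu' γ hγ huu
    rw [Submodule.mem_toAddSubgroup, mixedEmbedding.mem_span_fractionalIdealLatticeBasis] at hγ
    obtain ⟨x, hx, rfl⟩ := hγ
    by_contra hne
    have hx0 : x ≠ 0 := by rintro rfl; simp at hne
    have hN := norm_ge_of_mem K I I.ne_zero x hx hx0
    rw [hnorm] at hN
    have hxe : mixedEmbedding K x = u - u' := by rw [huu]; abel
    have hxm : mixedEmbedding K x ∈ mixedEmbedding.convexBodyLT K (fun _ => rr + rr) := by
      rw [hxe, Set.mem_prod]
      obtain ⟨h1, h2⟩ := hUmem u hu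
      obtain ⟨h3, h4⟩ := hUmem u' hu'
      refine ⟨fun w _ => ?_, fun w _ => ?_⟩
      · rw [mem_ball_zero_iff]
        refine (norm_sub_le _ _).trans_lt ?_
        exact add_lt_add (h1 w) (h3 w)
      · rw [mem_ball_zero_iff]
        refine (norm_sub_le _ _).trans_lt ?_
        exact add_lt_add (h2 w) (h4 w)
    rw [mixedEmbedding.convexBodyLT_mem] at hxm
    have hle : ((|Algebra.norm ℚ x| : ℚ) : ℝ) ≤ (2 * r) ^ (Module.finrank ℚ K) := by
      rw [← InfinitePlace.prod_eq_abs_norm, ← InfinitePlace.sum_mult_eq,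
        ← Finset.prod_pow_eq_pow_sum]
      refine Finset.prod_le_prod (fun w _ => pow_nonneg (apply_nonneg _ _) _) (fun w _ => ?_)
      refine pow_le_pow_left₀ (apply_nonneg _ _) ((hxm w).le.trans ?_) _
      rw [two_mul]; rfl
    have hN' : D⁻¹ ≤ ((|Algebra.norm ℚ x| : ℚ) : ℝ) := by
      have := (Rat.cast_le (K := ℝ)).mpr hN
      push_cast at this ⊢
      rw [hD]; push_cast
      exact this
    have : D⁻¹ * D < 1 := lt_of_le_of_lt (mul_le_mul_of_nonneg_right (hN'.trans hle) (by linarith)) hrD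
    rw [inv_mul_cancel₀ (by linarith)] at this
    exact lt_irrefl _ this

theorem lattice_count (n : ℕ) (hn : 1 ≤ n) (c : ℝ) (hc : 0 < c) :
    ∃ C : ℝ, 0 < C ∧ ∀ (K : Type*) [Field K] [NumberField K], Module.finrank ℚ K = n →
      ∀ S : Finset (𝓞 K), (∀ a ∈ S, ∀ w : InfinitePlace K,
        w (a : K) ≤ c * ((discr K).natAbs : ℝ) ^ (1 / (n : ℝ))) →
      (S.card : ℝ) ≤ C * ((discr K).natAbs : ℝ) ^ (1 / 2 : ℝ) := by
  have hn' : (1 : ℝ) ≤ n := by exact_mod_cast hn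
  set r0 : ℝ := 1 / (8 * n * (c + 1)) with hr0
  have hr0p : 0 < r0 := by positivity
  refine ⟨2 / r0 ^ n, by positivity, ?_⟩
  intro K _ _ hK S hS
  set D : ℝ := ((discr K).natAbs : ℝ) with hD
  have hD1 : 1 ≤ D := by
    rw [hD]; exact_mod_cast Int.natAbs_pos.mpr (discr_ne_zero K)
  set E := D ^ (1 / (n : ℝ)) with hE
  have hEp : 0 < E := by positivity
  have hEn : E ^ n = D := by
    rw [hE, one_div]; exact Real.rpow_inv_natCast_pow (by linarith) (by omega)
  have key := lattice_count_K K (c * E) (r0 / E) (by positivity) (by positivity) ?_ ?_ S hS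
  · rw [hK, ← hD, div_pow, hEn] at key
    rw [← Real.sqrt_eq_rpow]
    have hs : √D * √D = D := Real.mul_self_sqrt (by linarith)
    have hs0 : 0 < √D := Real.sqrt_pos.mpr (by linarith)
    have h3 : (S.card : ℝ) * (r0 ^ n / D) * √D = S.card * r0 ^ n / √D := by
      have : r0 ^ n / D * √D = r0 ^ n / √D := by
        rw [div_mul_eq_mul_div, div_eq_div_iff (by linarith) hs0.ne', mul_assoc, hs]
      rw [mul_assoc, this, mul_div_assoc]
    rw [h3, div_le_iff₀ hs0] at key
    rw [div_mul_eq_mul_div, le_div_iff₀ (by positivity)]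
    exact key
  · rw [hK, hr0]
    have : (n : ℝ) * (c * E * (1 / (8 * n * (c + 1)) / E)) = (c / (c + 1)) * (1 / 8) := by
      field_simp
    rw [this]
    have : c / (c + 1) ≤ 1 := by rw [div_le_one (by linarith)]; linarith
    linarith
  · rw [hK, ← hD, ← hEn, ← mul_pow]
    refine pow_lt_one₀ (by positivity) ?_ (by omega)
    have : 2 * (r0 / E) * E = 2 * r0 := by field_simp
    rw [this, hr0, mul_one_div, div_lt_one (by positivity)]
    nlinarith
end

section
open NumberField MeasureTheory

open Classical in
lemma mink_vol (K : Type*) [Field K] [NumberField K]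
    (I : (FractionalIdeal (nonZeroDivisors (𝓞 K)) K)ˣ) (f : InfinitePlace K → NNReal)
    (h : (2 : ℝ) ^ (Module.finrank ℚ K) * √((discr K).natAbs : ℝ)
      * (FractionalIdeal.absNorm I.1 : ℝ) < ∏ w, (f w : ℝ) ^ (w.mult)) :
    ∃ a ∈ (I : FractionalIdeal (nonZeroDivisors (𝓞 K)) K), a ≠ 0 ∧
      ∀ w : InfinitePlace K, w a < f w := by
  refine mixedEmbedding.exists_ne_zero_mem_ideal_lt K I ?_
  rw [mixedEmbedding.minkowskiBound,
    mixedEmbedding.volume_fundamentalDomain_fractionalIdealLatticeBasis,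
    mixedEmbedding.volume_fundamentalDomain_latticeBasis, mixedEmbedding.convexBodyLT_volume,
    mixedEmbedding.finrank]
  set D : ℝ := ((discr K).natAbs : ℝ) with hD
  have hI0 : (0 : ℝ) ≤ (FractionalIdeal.absNorm I.1 : ℝ) := by
    exact_mod_cast FractionalIdeal.absNorm_nonneg I.1
  have e1 : (NNReal.sqrt ‖discr K‖₊ : ENNReal) = ENNReal.ofReal (√D) := by
    rw [← ENNReal.ofReal_coe_nnreal, Real.coe_sqrt, coe_nnnorm, Int.norm_eq_abs, hD,
      Nat.cast_natAbs, Int.cast_abs]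
  have e2 : (2⁻¹ : ENNReal) = ENNReal.ofReal (2⁻¹ : ℝ) := by
    rw [ENNReal.ofReal_inv_of_pos (by norm_num)]; simp
  have e3 : (2 : ENNReal) = ENNReal.ofReal 2 := by simp
  rw [e1, e2, e3, ← ENNReal.ofReal_pow (by norm_num), ← ENNReal.ofReal_pow (by norm_num),
    ← ENNReal.ofReal_mul (by positivity), ← ENNReal.ofReal_mul hI0,
    ← ENNReal.ofReal_mul (by positivity), ← ENNReal.coe_mul, ← ENNReal.ofReal_coe_nnreal]
  rw [ENNReal.ofReal_lt_ofReal_iff_of_nonneg (by positivity)]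
  calc _ ≤ (FractionalIdeal.absNorm I.1 : ℝ) * (1 * √D) * 2 ^ (Module.finrank ℚ K) := by
        gcongr
        exact pow_le_one₀ (by norm_num) (by norm_num)
    _ = (2 : ℝ) ^ (Module.finrank ℚ K) * √D * (FractionalIdeal.absNorm I.1 : ℝ) := by ring
    _ < _ := h
    _ ≤ _ := by
        rw [NNReal.coe_mul, NNReal.coe_prod]
        simp only [NNReal.coe_pow]
        refine le_mul_of_one_le_left (by positivity) ?_
        exact_mod_cast mixedEmbedding.one_le_convexBodyLTFactor K

theorem mink_step (K : Type*) [Field K] [NumberField K] (c : ClassGroup (𝓞 K)) (hc : c ^ 2 = 1) :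
    ∃ (J : nonZeroDivisors (Ideal (𝓞 K))) (α : 𝓞 K), α ≠ 0 ∧
      (J : Ideal (𝓞 K)) ^ 2 = Ideal.span {α} ∧ ClassGroup.mk0 J = c ∧
      ∀ w : InfinitePlace K,
        w (α : K) ≤ 9 * ((discr K).natAbs : ℝ) ^ (1 / (Module.finrank ℚ K : ℝ)) := by
  obtain ⟨I, rfl⟩ := ClassGroup.mk0_surjective c
  rw [← map_pow, ClassGroup.mk0_eq_one_iff] at hc
  obtain ⟨β, hβ⟩ := hc
  have hI0 : (I : Ideal (𝓞 K)) ≠ 0 := nonZeroDivisors.coe_ne_zero I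
  have hβ' : (I : Ideal (𝓞 K)) ^ 2 = Ideal.span {β} := by
    simpa [Ideal.submodule_span_eq] using hβ
  have hβ0 : β ≠ 0 := by
    rintro rfl
    apply hI0
    have : (I : Ideal (𝓞 K)) ^ 2 = 0 := by rw [hβ']; simp
    exact pow_eq_zero_iff (two_ne_zero) |>.mp this
  have hβK : (β : K) ≠ 0 := RingOfIntegers.coe_ne_zero_iff.mpr hβ0
  set D : ℝ := ((discr K).natAbs : ℝ) with hD
  have hD1 : 1 ≤ D := by
    rw [hD]; exact_mod_cast Int.natAbs_pos.mpr (discr_ne_zero K)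
  set n := Module.finrank ℚ K with hn
  have hn0 : n ≠ 0 := (Module.finrank_pos).ne'
  set E := D ^ (1 / (n : ℝ)) with hE
  have hEp : 0 < E := by positivity
  have hEn : E ^ n = D := by
    rw [hE, one_div]; exact Real.rpow_inv_natCast_pow (by linarith) hn0
  have hIf : ((I : Ideal (𝓞 K)) : FractionalIdeal (nonZeroDivisors (𝓞 K)) K) ≠ 0 := by
    rw [Ne, FractionalIdeal.coeIdeal_eq_zero]; exact hI0
  set Iu : (FractionalIdeal (nonZeroDivisors (𝓞 K)) K)ˣ := (Units.mk0 _ hIf)⁻¹ with hIu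
  have hIuv : (Iu : FractionalIdeal (nonZeroDivisors (𝓞 K)) K)
      = ((I : Ideal (𝓞 K)) : FractionalIdeal (nonZeroDivisors (𝓞 K)) K)⁻¹ := by
    rw [hIu, Units.val_inv_eq_inv_val, Units.val_mk0]
  set N : ℝ := (Ideal.absNorm (I : Ideal (𝓞 K)) : ℝ) with hN
  have hNpos : 0 < N := by
    rw [hN]; exact_mod_cast Nat.pos_of_ne_zero (Ideal.absNorm_eq_zero_iff.not.mpr hI0)
  have hNβ : ∏ w : InfinitePlace K, w (β : K) ^ w.mult = N ^ 2 := by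
    rw [InfinitePlace.prod_eq_abs_norm, ← FractionalIdeal.absNorm_span_singleton (𝓞 K)]
    have : FractionalIdeal.spanSingleton (nonZeroDivisors (𝓞 K)) (β : K) =
        (((I : Ideal (𝓞 K)) ^ 2 : Ideal (𝓞 K)) : FractionalIdeal (nonZeroDivisors (𝓞 K)) K) := by
      rw [hβ', FractionalIdeal.coeIdeal_span_singleton]
    rw [this, FractionalIdeal.coeIdeal_absNorm, map_pow, hN]
    push_cast; rfl
  have hwβ : ∀ w : InfinitePlace K, 0 < w (β : K) := fun w => InfinitePlace.pos_iff.mpr hβK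
  set f : InfinitePlace K → NNReal := fun w =>
    ⟨3 * √E / √(w (β : K)), by positivity⟩ with hf
  have hfv : ∀ w, (f w : ℝ) = 3 * √E / √(w (β : K)) := fun w => rfl
  have hprod : ∏ w : InfinitePlace K, (f w : ℝ) ^ w.mult = 3 ^ n * √D / N := by
    have hp2 : (∏ w : InfinitePlace K, (f w : ℝ) ^ w.mult) ^ 2 = (3 ^ n * √D / N) ^ 2 := by
      rw [← Finset.prod_pow]
      have : ∀ w : InfinitePlace K, ((f w : ℝ) ^ w.mult) ^ 2
          = (9 * E) ^ w.mult / (w (β : K)) ^ w.mult := by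
        intro w
        rw [← pow_mul, mul_comm, pow_mul, hfv, div_pow, mul_pow, Real.sq_sqrt hEp.le,
          Real.sq_sqrt (hwβ w).le, div_pow]
        norm_num
      rw [Finset.prod_congr rfl (fun w _ => this w), Finset.prod_div_distrib, hNβ,
        Finset.prod_pow_eq_pow_sum, InfinitePlace.sum_mult_eq, mul_pow, ← hn, hEn, div_pow, mul_pow,
        Real.sq_sqrt (by linarith), ← pow_mul, mul_comm n 2, pow_mul]
      norm_num
    exact (pow_left_inj₀ (Finset.prod_nonneg fun w _ => by positivity) (by positivity)
      two_ne_zero).mp hp2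
  obtain ⟨κ, hκ, hκ0, hκw⟩ := mink_vol K Iu f (by
    rw [hprod, hIuv, map_inv₀, FractionalIdeal.coeIdeal_absNorm]
    push_cast
    rw [← hN, ← hn, ← div_eq_mul_inv]
    have : (2 : ℝ) ^ n < 3 ^ n := pow_lt_pow_left₀ (by norm_num) (by norm_num) hn0
    have hs0 : 0 < √D := Real.sqrt_pos.mpr (by linarith)
    gcongr)
  rw [hIuv] at hκ
  have hle : FractionalIdeal.spanSingleton (nonZeroDivisors (𝓞 K)) κ *
      ((I : Ideal (𝓞 K)) : FractionalIdeal (nonZeroDivisors (𝓞 K)) K) ≤ 1 := by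
    rw [← inv_mul_cancel₀ hIf]
    exact mul_le_mul_left (FractionalIdeal.spanSingleton_le_iff_mem.mpr hκ) _
  obtain ⟨J, hJ⟩ := FractionalIdeal.le_one_iff_exists_coeIdeal.mp hle
  have hJ2 : ((J ^ 2 : Ideal (𝓞 K)) : FractionalIdeal (nonZeroDivisors (𝓞 K)) K)
      = FractionalIdeal.spanSingleton (nonZeroDivisors (𝓞 K)) (κ ^ 2 * β) := by
    rw [FractionalIdeal.coeIdeal_pow, hJ, mul_pow, ← FractionalIdeal.coeIdeal_pow, hβ',
      FractionalIdeal.coeIdeal_span_singleton, FractionalIdeal.spanSingleton_pow,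
      FractionalIdeal.spanSingleton_mul_spanSingleton]
  have hα : κ ^ 2 * (β : K) ∈ (1 : FractionalIdeal (nonZeroDivisors (𝓞 K)) K) := by
    have h1 : κ ^ 2 * (β : K) ∈
        FractionalIdeal.spanSingleton (nonZeroDivisors (𝓞 K)) (κ ^ 2 * (β : K)) :=
      FractionalIdeal.mem_spanSingleton_self _ _
    rw [← hJ2] at h1
    exact FractionalIdeal.coeIdeal_le_one h1
  obtain ⟨α, hα⟩ := (FractionalIdeal.mem_one_iff _).mp hα
  have hα' : (α : K) = κ ^ 2 * (β : K) := hα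
  have hα0 : α ≠ 0 := by
    rintro rfl
    have : κ ^ 2 * (β : K) = 0 := by rw [← hα']; simp
    exact (mul_ne_zero (pow_ne_zero 2 hκ0) hβK) this
  have hJα : J ^ 2 = Ideal.span {α} := by
    apply FractionalIdeal.coeIdeal_injective (K := K)
    beta_reduce
    rw [hJ2, FractionalIdeal.coeIdeal_span_singleton, hα]
  have hJ0 : J ≠ 0 := by
    rintro rfl
    apply hα0
    rw [zero_pow two_ne_zero] at hJα
    exact Ideal.span_singleton_eq_bot.mp hJα.symm
  refine ⟨⟨J, mem_nonZeroDivisors_of_ne_zero hJ0⟩, α, hα0, hJα, ?_, ?_⟩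
  · rw [ClassGroup.mk0_eq_mk0_iff]
    obtain ⟨a, b, hb, hab⟩ := IsFractionRing.div_surjective (A := 𝓞 K) κ
    have hb0 : b ≠ 0 := nonZeroDivisors.ne_zero hb
    have hbK : (algebraMap (𝓞 K) K b) ≠ 0 := by
      exact RingOfIntegers.coe_ne_zero_iff.mpr hb0
    have ha0 : a ≠ 0 := by
      rintro rfl
      apply hκ0; rw [← hab]; simp
    refine ⟨b, a, hb0, ha0, ?_⟩
    apply FractionalIdeal.coeIdeal_injective (K := K)
    simp only [FractionalIdeal.coeIdeal_mul]
    rw [hJ, FractionalIdeal.coeIdeal_span_singleton, FractionalIdeal.coeIdeal_span_singleton,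
      ← mul_assoc, FractionalIdeal.spanSingleton_mul_spanSingleton, ← hab, mul_div_cancel₀ _ hbK]
  · intro w
    rw [hα', map_mul, map_pow]
    have h1 := (hκw w).le
    rw [hfv] at h1
    have h2 := pow_le_pow_left₀ (apply_nonneg w κ) h1 2
    rw [div_pow, mul_pow, Real.sq_sqrt hEp.le, Real.sq_sqrt (hwβ w).le, le_div_iff₀ (hwβ w)] at h2
    linarith
end

section
open NumberField Polynomial
open scoped IntermediateField

lemma norm_eval_field (k K : Type*) [Field k] [Field K] [Algebra k K] [FiniteDimensional k K] (a : K) (x : k) :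
    Algebra.norm k (algebraMap k K x - a)
      = ((minpoly k a).eval x) ^ (Module.finrank k⟮a⟯ K) := by
  have hint : IsIntegral k a := Algebra.IsIntegral.isIntegral a
  set g := IntermediateField.AdjoinSimple.gen k a with hg
  have h1 : algebraMap k K x - a = algebraMap k⟮a⟯ K (algebraMap k k⟮a⟯ x - g) := by
    rw [map_sub, hg, IntermediateField.AdjoinSimple.algebraMap_gen,
      ← IsScalarTower.algebraMap_apply]
  rw [h1, ← Algebra.norm_norm (R := k) (S := k⟮a⟯), Algebra.norm_algebraMap, map_pow]
  congr 1
  set pb := IntermediateField.adjoin.powerBasis hint with hpb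
  have hgen : pb.gen = g := IntermediateField.adjoin.powerBasis_gen hint
  have h2 := charpoly_leftMulMatrix pb
  rw [hgen, hg, IntermediateField.minpoly_gen] at h2
  rw [← h2, Matrix.eval_charpoly]
  refine (Algebra.norm_eq_matrix_det pb.basis (algebraMap k k⟮a⟯ x - g)).trans ?_
  rw [map_sub, AlgHom.commutes]
  rfl

lemma norm_eval (K : Type*) [Field K] [NumberField K] (a : 𝓞 K) (x : ℤ) :
    Algebra.norm ℤ ((x : 𝓞 K) - a)
      = ((minpoly ℤ a) ^ (Module.finrank ℚ⟮(a : K)⟯ K)).eval x := by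
  have h := norm_eval_field ℚ K (a : K) (x : ℚ)
  have hm : minpoly ℚ (a : K) = (minpoly ℤ a).map (Int.castRingHom ℚ) :=
    minpoly.isIntegrallyClosed_eq_field_fractions ℚ K a.isIntegral
  have h1 := Algebra.coe_norm_int ((x : 𝓞 K) - a)
  have h2 : (((x : 𝓞 K) - a : 𝓞 K) : K) = algebraMap ℚ K (x : ℚ) - a := by
    simp
  rw [h2, h, hm] at h1
  have h3 : (x : ℚ) = Int.castRingHom ℚ x := rfl
  rw [h3, Polynomial.eval_map_apply] at h1
  rw [Polynomial.eval_pow]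
  rw [eq_intCast] at h1
  exact_mod_cast h1

lemma natDegree_pow (K : Type*) [Field K] [NumberField K] (a : 𝓞 K) :
    ((minpoly ℤ a) ^ (Module.finrank ℚ⟮(a : K)⟯ K)).natDegree = Module.finrank ℚ K := by
  have hmon : (minpoly ℤ a).Monic := minpoly.monic a.isIntegral
  have hm : minpoly ℚ (a : K) = (minpoly ℤ a).map (Int.castRingHom ℚ) :=
    minpoly.isIntegrallyClosed_eq_field_fractions ℚ K a.isIntegral
  rw [hmon.natDegree_pow, ← hmon.natDegree_map (Int.castRingHom ℚ), ← hm,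
    ← IntermediateField.adjoin.finrank (Algebra.IsIntegral.isIntegral (a : K)), mul_comm,
    Module.finrank_mul_finrank]

lemma nonsq (K : Type*) [Field K] [NumberField K] (a : 𝓞 K)
    (hodd : Odd (Module.finrank ℚ⟮(a : K)⟯ K)) (s : ℤ) (hs : s ^ 2 = 1) (P Q : ℚ[X])
    (h : P ^ 2 = C (s : ℚ) * ((minpoly ℤ a) ^ (Module.finrank ℚ⟮(a : K)⟯ K)).map
      (Int.castRingHom ℚ) * Q ^ 2) : Q = 0 := by
  by_contra hQ
  have hm : minpoly ℚ (a : K) = (minpoly ℤ a).map (Int.castRingHom ℚ) :=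
    minpoly.isIntegrallyClosed_eq_field_fractions ℚ K a.isIntegral
  rw [Polynomial.map_pow, ← hm] at h
  set m := minpoly ℚ (a : K) with hmdef
  set k := Module.finrank ℚ⟮(a : K)⟯ K with hk
  have hint : IsIntegral ℚ (a : K) := Algebra.IsIntegral.isIntegral _
  have hp : Prime m := (minpoly.irreducible hint).prime
  have hs0 : (s : ℚ) ≠ 0 := by
    have : s ≠ 0 := by rintro rfl; norm_num at hs
    exact_mod_cast this
  have hCu : IsUnit (C (s : ℚ)) := Polynomial.isUnit_C.mpr hs0.isUnit
  have hP : P ≠ 0 := by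
    rintro rfl
    rw [zero_pow two_ne_zero] at h
    exact (mul_ne_zero (mul_ne_zero hCu.ne_zero (pow_ne_zero k hp.ne_zero)) (pow_ne_zero 2 hQ)) h.symm
  have hfP := FiniteMultiplicity.of_prime_left hp hP
  have hfQ := FiniteMultiplicity.of_prime_left hp hQ
  have hfC := FiniteMultiplicity.of_prime_left hp hCu.ne_zero
  have e := congrArg (emultiplicity m) h
  rw [emultiplicity_mul hp, emultiplicity_mul hp, emultiplicity_pow_self hp.ne_zero hp.not_isUnit,
    emultiplicity_pow hp, emultiplicity_pow hp, hfP.emultiplicity_eq_multiplicity,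
    hfQ.emultiplicity_eq_multiplicity, emultiplicity_eq_zero.mpr
      (fun hd => hp.not_isUnit (isUnit_of_dvd_unit hd hCu))] at e
  have e' : 2 * multiplicity m P = k + 2 * multiplicity m Q := by
    have := e
    rw [zero_add] at this
    exact_mod_cast this
  obtain ⟨j, hj⟩ := hodd
  omega
end

section
open NumberField Polynomial
open scoped IntermediateField

open Classical in
lemma fiber_count (n : ℕ) (δ A : ℝ)
    (hA : ∀ (B : ℝ), 1 ≤ B → ∀ (f : ℤ[X]), f.Monic → f.natDegree = n →
      ∀ s : ℤ, s ^ 2 = 1 →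
      (∀ P Q : ℚ[X], P ^ 2 = C (s : ℚ) * f.map (Int.castRingHom ℚ) * Q ^ 2 → Q = 0) →
      (∀ x : ℤ, |(x : ℝ)| ≤ B → |((f.eval x : ℤ) : ℝ)| ≤ (2 * B) ^ n) →
      ∀ T : Finset ℤ, (∀ x ∈ T, |(x : ℝ)| ≤ B ∧ ∃ y : ℤ, f.eval x = s * y ^ 2) →
      (T.card : ℝ) ≤ A * B ^ (1 / 2 + δ))
    (K : Type*) [Field K] [NumberField K] (hK : Module.finrank ℚ K = n)
    (t : 𝓞 K) (hodd : Odd (Module.finrank ℚ⟮(t : K)⟯ K)) (B : ℝ) (hB : 1 ≤ B)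
    (ht : ∀ w : InfinitePlace K, w (t : K) ≤ B) (T : Finset ℤ)
    (hT : ∀ x ∈ T, |(x : ℝ)| ≤ B ∧ ∃ s : ℤ, s ^ 2 = 1 ∧ ∃ y : ℤ,
      Algebra.norm ℤ ((x : 𝓞 K) - t) = s * y ^ 2) :
    (T.card : ℝ) ≤ 2 * (A * B ^ (1 / 2 + δ)) := by
  set f := (minpoly ℤ t) ^ (Module.finrank ℚ⟮(t : K)⟯ K) with hf
  have hmon : f.Monic := (minpoly.monic t.isIntegral).pow _
  have hdeg : f.natDegree = n := by rw [hf, natDegree_pow, hK]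
  have hbd : ∀ x : ℤ, |(x : ℝ)| ≤ B → |((f.eval x : ℤ) : ℝ)| ≤ (2 * B) ^ n := by
    intro x hx
    rw [hf, ← norm_eval]
    have h1 := InfinitePlace.prod_eq_abs_norm (((x : 𝓞 K) - t : 𝓞 K) : K)
    rw [← Algebra.coe_norm_int] at h1
    have h2 : |((Algebra.norm ℤ ((x : 𝓞 K) - t) : ℤ) : ℝ)|
        = ∏ w : InfinitePlace K, w (((x : 𝓞 K) - t : 𝓞 K) : K) ^ w.mult := by
      rw [h1]; push_cast; rfl
    rw [h2, ← hK, ← InfinitePlace.sum_mult_eq, ← Finset.prod_pow_eq_pow_sum]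
    refine Finset.prod_le_prod (fun w _ => pow_nonneg (apply_nonneg _ _) _) (fun w _ => ?_)
    refine pow_le_pow_left₀ (apply_nonneg _ _) ?_ _
    have h3 : (((x : 𝓞 K) - t : 𝓞 K) : K) = (x : K) - t := by simp
    rw [h3]
    have h4 : w ((x : K) - t) ≤ w (x : K) + w (t : K) := by
      rw [sub_eq_add_neg]
      refine (w.1.add_le _ _).trans (le_of_eq ?_)
      congr 1
      exact w.1.map_neg _
    have h5 : w (x : K) = |(x : ℝ)| := by
      rw [← InfinitePlace.norm_embedding_eq, map_intCast, Complex.norm_intCast]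
    have := ht w
    linarith
  have hs : ∀ s : ℤ, s ^ 2 = 1 → ((T.filter (fun x => ∃ y : ℤ, f.eval x = s * y ^ 2)).card : ℝ)
      ≤ A * B ^ (1 / 2 + δ) := by
    intro s hs
    refine hA B hB f hmon hdeg s hs (fun P Q h => nonsq K t hodd s hs P Q h) hbd _ ?_
    intro x hx
    rw [Finset.mem_filter] at hx
    exact ⟨(hT x hx.1).1, hx.2⟩
  have hsub : T ⊆ T.filter (fun x => ∃ y : ℤ, f.eval x = 1 * y ^ 2) ∪
      T.filter (fun x => ∃ y : ℤ, f.eval x = (-1) * y ^ 2) := by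
    intro x hx
    obtain ⟨_, s, hs, y, hy⟩ := hT x hx
    rw [norm_eval] at hy
    rw [Finset.mem_union, Finset.mem_filter, Finset.mem_filter]
    rcases mul_self_eq_one_iff.mp ((sq s).symm.trans hs) with rfl | rfl
    · exact Or.inl ⟨hx, y, hy⟩
    · exact Or.inr ⟨hx, y, hy⟩
  have hc := (Finset.card_le_card hsub).trans (Finset.card_union_le _ _)
  have h1 := hs 1 (by norm_num)
  have h2 := hs (-1) (by norm_num)
  have hc' : (T.card : ℝ) ≤ ((T.filter (fun x => ∃ y : ℤ, f.eval x = 1 * y ^ 2)).card : ℝ) +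
      ((T.filter (fun x => ∃ y : ℤ, f.eval x = (-1) * y ^ 2)).card : ℝ) := by exact_mod_cast hc
  linarith

open Classical in
theorem odd_count (n : ℕ) (hn : 1 ≤ n) (δ : ℝ) (hδ : 0 < δ) (hδ2 : δ ≤ 1 / 2) :
    ∃ C : ℝ, 0 < C ∧ ∀ (K : Type*) [Field K] [NumberField K], Module.finrank ℚ K = n →
      ∀ S : Finset (𝓞 K), (∀ a ∈ S, (∀ w : InfinitePlace K,
        w (a : K) ≤ 9 * ((discr K).natAbs : ℝ) ^ (1 / (n : ℝ))) ∧
        Odd (Module.finrank ℚ⟮(a : K)⟯ K) ∧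
        ∃ s : ℤ, s ^ 2 = 1 ∧ ∃ y : ℤ, Algebra.norm ℤ a = s * y ^ 2) →
      (S.card : ℝ) ≤ C * ((discr K).natAbs : ℝ) ^ ((1 : ℝ) / 2 - 1 / (2 * (n : ℝ)) + δ) := by
  obtain ⟨A, hA0, hA⟩ := bp_main n δ hδ hδ2
  obtain ⟨C, hC0, hC⟩ := lattice_count n hn 18 (by norm_num)
  refine ⟨C * (2 * A * 18), by positivity, ?_⟩
  intro K _ _ hK S hS
  have hCK := hC K hK
  set D : ℝ := ((discr K).natAbs : ℝ) with hD
  have hD1 : 1 ≤ D := by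
    rw [hD]; exact_mod_cast Int.natAbs_pos.mpr (discr_ne_zero K)
  have hn' : (1 : ℝ) ≤ n := by exact_mod_cast hn
  set E := D ^ (1 / (n : ℝ)) with hE
  have hE1 : 1 ≤ E := Real.one_le_rpow hD1 (by positivity)
  let H : AddSubgroup (𝓞 K) := (Int.castAddHom (𝓞 K)).range
  let q : 𝓞 K → 𝓞 K ⧸ H := fun a => (a : 𝓞 K ⧸ H)
  have hwint : ∀ (w : InfinitePlace K) (x : ℤ), w (x : K) = |(x : ℝ)| := by
    intro w x
    rw [← InfinitePlace.norm_embedding_eq, map_intCast, Complex.norm_intCast]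
  have hwadd : ∀ (w : InfinitePlace K) (a b : K), w (a + b) ≤ w a + w b := fun w a b => w.1.add_le _ _
  have hwneg : ∀ (w : InfinitePlace K) (a : K), w (-a) = w a := fun w a => w.1.map_neg _
  -- fibers
  have hfib : ∀ c ∈ S.image q, ((S.filter (fun a => q a = c)).card : ℝ)
      ≤ 2 * (A * (18 * E) ^ (1 / 2 + δ)) := by
    intro c hc
    obtain ⟨t, htS, rfl⟩ := Finset.mem_image.mp hc
    obtain ⟨htw, htodd, _⟩ := hS t htS
    have hx : ∀ a ∈ S.filter (fun a => q a = q t), ∃ x : ℤ, a = t - (x : 𝓞 K) := by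
      intro a ha
      have h1 := (Finset.mem_filter.mp ha).2
      have h2 : -t + a ∈ H := QuotientAddGroup.eq.mp h1.symm
      obtain ⟨x, hx⟩ := h2
      refine ⟨-x, ?_⟩
      have : (x : 𝓞 K) = -t + a := hx
      push_cast
      rw [this]; ring
    choose! g hg using hx
    have hinj : Set.InjOn g (S.filter (fun a => q a = q t) : Finset (𝓞 K)) := by
      intro a ha b hb hab
      rw [hg a ha, hg b hb, hab]
    rw [← Finset.card_image_of_injOn hinj]
    refine fiber_count n δ A hA K hK t htodd (18 * E) (by linarith)
      (fun w => (htw w).trans (by linarith)) _ ?_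
    intro x hx
    obtain ⟨a, ha, rfl⟩ := Finset.mem_image.mp hx
    obtain ⟨haw, _, s, hs, y, hy⟩ := hS a (Finset.mem_filter.mp ha).1
    have hgx : ((g a : ℤ) : 𝓞 K) - t = -a := by
      have := hg a ha
      rw [eq_sub_iff_add_eq] at this
      rw [← this]; ring
    refine ⟨?_, ?_⟩
    · obtain ⟨w⟩ : Nonempty (InfinitePlace K) := inferInstance
      rw [← hwint w]
      have h1 : ((g a : ℤ) : K) = (t : K) + -(a : K) := by
        have := congrArg (fun z : 𝓞 K => (z : K)) hgx
        simp only [map_sub, map_neg, map_intCast] at this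
        linear_combination this
      rw [h1]
      have h2 := hwadd w (t : K) (-(a : K))
      rw [hwneg] at h2
      have := htw w
      have := haw w
      linarith
    · rw [hgx]
      have hneg : Algebra.norm ℤ (-a) = (-1) ^ n * Algebra.norm ℤ a := by
        have : (-a) = algebraMap ℤ (𝓞 K) (-1) * a := by simp
        rw [this, map_mul, Algebra.norm_algebraMap, RingOfIntegers.rank, hK]
      refine ⟨(-1) ^ n * s, ?_, y, ?_⟩
      · rw [mul_pow, hs, ← pow_mul, mul_comm n 2, pow_mul]; norm_num
      · rw [hneg, hy]; ring
  -- number of cosets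
  have hcos : ((S.image q).card : ℝ) * E ≤ C * D ^ (1 / 2 : ℝ) := by
    have hrep : ∀ c ∈ S.image q, ∃ t ∈ S, q t = c := fun c hc => Finset.mem_image.mp hc
    choose! rep hrepS hrepq using hrep
    set M := ⌊E⌋₊ with hM
    let F : (𝓞 K ⧸ H) × ℕ → 𝓞 K := fun p => rep p.1 + ((p.2 : ℕ) : 𝓞 K)
    have hFinj : Set.InjOn F ((S.image q) ×ˢ Finset.range (M + 1) : Finset _) := by
      rintro ⟨c, i⟩ hp ⟨c', i'⟩ hp' hh
      rw [Finset.mem_coe, Finset.mem_product] at hp hp'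
      have hh' : rep c + (i : 𝓞 K) = rep c' + (i' : 𝓞 K) := hh
      have hqadd : ∀ (a : 𝓞 K) (j : ℕ), q (a + (j : 𝓞 K)) = q a := by
        intro a j
        refine (QuotientAddGroup.eq.mpr ?_).symm
        refine ⟨(j : ℤ), ?_⟩
        simp
      have hcc : c = c' := by
        rw [← hrepq c hp.1, ← hrepq c' hp'.1, ← hqadd _ i, hh', hqadd]
      subst hcc
      have : (i : 𝓞 K) = (i' : 𝓞 K) := add_left_cancel hh'
      rw [Nat.cast_injective this]
    have hcard : (((S.image q) ×ˢ Finset.range (M + 1)).image F).card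
        = (S.image q).card * (M + 1) := by
      rw [Finset.card_image_of_injOn hFinj, Finset.card_product, Finset.card_range]
    have hb := hCK (((S.image q) ×ˢ Finset.range (M + 1)).image F) (by
      intro a ha w
      obtain ⟨⟨c, i⟩, hp, rfl⟩ := Finset.mem_image.mp ha
      rw [Finset.mem_product] at hp
      have h1 := (hS _ (hrepS c hp.1)).1 w
      have h2 : ((F (c, i) : 𝓞 K) : K) = (rep c : K) + (((i : ℕ) : ℤ) : K) := by
        simp [F]
      rw [h2]
      have h3 := hwadd w (rep c : K) (((i : ℕ) : ℤ) : K)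
      rw [hwint] at h3
      have hi : i ≤ M := Nat.lt_succ_iff.mp (Finset.mem_range.mp hp.2)
      have h4 : ((i : ℕ) : ℝ) ≤ E := (Nat.cast_le.mpr hi).trans (Nat.floor_le (by linarith))
      have h5 : |(((i : ℕ) : ℤ) : ℝ)| = (i : ℝ) := by simp
      rw [h5] at h3
      linarith)
    rw [hcard] at hb
    push_cast at hb
    refine le_trans ?_ hb
    exact mul_le_mul_of_nonneg_left (Nat.lt_floor_add_one E).le (by positivity)
  have hsum : (S.card : ℝ) ≤ (S.image q).card * (2 * (A * (18 * E) ^ (1 / 2 + δ))) := by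
    rw [Finset.card_eq_sum_card_image q S]
    push_cast
    rw [← nsmul_eq_mul]
    exact Finset.sum_le_card_nsmul _ _ _ hfib
  have h18 : (18 * E) ^ (1 / 2 + δ) ≤ 18 * E ^ (1 / 2 + δ) := by
    rw [Real.mul_rpow (by norm_num) (by linarith)]
    refine mul_le_mul_of_nonneg_right ?_ (by positivity)
    calc (18 : ℝ) ^ (1 / 2 + δ) ≤ (18 : ℝ) ^ (1 : ℝ) :=
          Real.rpow_le_rpow_of_exponent_le (by norm_num) (by linarith)
      _ = 18 := Real.rpow_one _
  have hEsplit : E ^ (1 / 2 + δ) = E * E ^ (δ - 1 / 2) := by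
    rw [← Real.rpow_one_add' (by linarith) (by linarith)]
    congr 1; ring
  have hEpow : E ^ (δ - 1 / 2) ≤ D ^ (-(1 / (2 * (n : ℝ))) + δ) := by
    rw [hE, ← Real.rpow_mul (by linarith)]
    refine Real.rpow_le_rpow_of_exponent_le hD1 ?_
    have : 1 / (n : ℝ) * (δ - 1 / 2) = -(1 / (2 * (n : ℝ))) + δ / n := by field_simp; ring
    rw [this]
    have : δ / n ≤ δ := div_le_self hδ.le hn'
    linarith
  calc (S.card : ℝ) ≤ (S.image q).card * (2 * (A * (18 * E) ^ (1 / 2 + δ))) := hsum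
    _ ≤ (S.image q).card * (2 * (A * (18 * (E * E ^ (δ - 1 / 2))))) := by
        rw [← hEsplit]; gcongr
    _ = ((S.image q).card * E) * (2 * A * 18) * E ^ (δ - 1 / 2) := by ring
    _ ≤ (C * D ^ (1 / 2 : ℝ)) * (2 * A * 18) * D ^ (-(1 / (2 * (n : ℝ))) + δ) := by
        gcongr
    _ = C * (2 * A * 18) * (D ^ (1 / 2 : ℝ) * D ^ (-(1 / (2 * (n : ℝ))) + δ)) := by ring
    _ = _ := by
        rw [← Real.rpow_add (by linarith)]
        congr 2; ring
end

section
open NumberField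

theorem div_bound_prime (δ : ℝ) (hδ : 0 < δ) : ∃ (c : ℝ) (P : ℕ), 1 ≤ c ∧
    ∀ p : ℕ, p.Prime → ∀ a : ℕ, ((a : ℝ) + 1) ≤ (if p < P then c else 1) * ((p : ℝ) ^ a) ^ δ := by
  refine ⟨1 + 1 / (δ * Real.log 2), ⌈(2 : ℝ) ^ (1 / δ)⌉₊, ?_, ?_⟩
  · have : 0 < Real.log 2 := Real.log_pos (by norm_num)
    have : 0 ≤ 1 / (δ * Real.log 2) := by positivity
    linarith
  intro p hp a
  have hl : 0 < Real.log 2 := Real.log_pos (by norm_num)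
  have hp2 : (2 : ℝ) ≤ p := by exact_mod_cast hp.two_le
  have hcomm : ∀ x : ℝ, 0 ≤ x → (x ^ a) ^ δ = (x ^ δ) ^ a := by
    intro x hx
    rw [← Real.rpow_natCast, ← Real.rpow_natCast, ← Real.rpow_mul hx, ← Real.rpow_mul hx, mul_comm]
  split_ifs with h
  · have h1 : ((2 : ℝ) ^ a) ^ δ ≤ ((p : ℝ) ^ a) ^ δ := by gcongr
    have h2 : 1 + a * (δ * Real.log 2) ≤ ((2 : ℝ) ^ a) ^ δ := by
      have e : ((2 : ℝ) ^ a) ^ δ = Real.exp (a * (δ * Real.log 2)) := by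
        rw [← Real.rpow_natCast, ← Real.rpow_mul (by norm_num), Real.rpow_def_of_pos (by norm_num)]
        congr 1; ring
      rw [e]
      linarith [Real.add_one_le_exp (a * (δ * Real.log 2))]
    have hx : 0 < δ * Real.log 2 := by positivity
    refine le_trans ?_ (mul_le_mul_of_nonneg_left (h2.trans h1) (by positivity))
    have : (1 + 1 / (δ * Real.log 2)) * (1 + a * (δ * Real.log 2))
        = a + 1 + (1 / (δ * Real.log 2) + a * (δ * Real.log 2)) := by field_simp; ring
    rw [this]
    have : 0 ≤ (1 / (δ * Real.log 2) + a * (δ * Real.log 2)) := by positivity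
    linarith
  · rw [one_mul, hcomm _ (by positivity)]
    have h1 : (2 : ℝ) ^ (1 / δ) ≤ p := (Nat.le_ceil _).trans (by exact_mod_cast not_lt.mp h)
    have h2 : (2 : ℝ) ≤ (p : ℝ) ^ δ := by
      calc (2 : ℝ) = ((2 : ℝ) ^ (1 / δ)) ^ δ := by
            rw [← Real.rpow_mul (by norm_num), one_div_mul_cancel hδ.ne', Real.rpow_one]
        _ ≤ _ := by gcongr
    calc (a : ℝ) + 1 ≤ 2 ^ a := by exact_mod_cast Nat.lt_two_pow_self
      _ ≤ _ := by gcongr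

theorem div_bound (δ : ℝ) (hδ : 0 < δ) : ∃ C : ℝ, 1 ≤ C ∧ ∀ t : ℕ, t ≠ 0 →
    (t.divisors.card : ℝ) ≤ C * (t : ℝ) ^ δ := by
  obtain ⟨c, P, hc, h⟩ := div_bound_prime δ hδ
  refine ⟨c ^ P, one_le_pow₀ hc, fun t ht => ?_⟩
  rw [Nat.card_divisors ht]
  push_cast
  have ht' : (t : ℝ) = ∏ p ∈ t.primeFactors, (p : ℝ) ^ t.factorization p := by
    conv_lhs => rw [← Nat.prod_factorization_pow_eq_self ht]
    rw [Finsupp.prod, Nat.support_factorization]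
    push_cast; rfl
  calc ∏ p ∈ t.primeFactors, ((t.factorization p : ℝ) + 1)
      ≤ ∏ p ∈ t.primeFactors, ((if p < P then c else 1) * ((p : ℝ) ^ t.factorization p) ^ δ) := by
        refine Finset.prod_le_prod (fun _ _ => by positivity) fun p hp => ?_
        exact h p (Nat.prime_of_mem_primeFactors hp) _
    _ = (∏ p ∈ t.primeFactors, (if p < P then c else 1)) * (t : ℝ) ^ δ := by
        rw [Finset.prod_mul_distrib]
        conv_rhs => rw [ht']
        rw [Real.finsetProd_rpow _ _ (fun _ _ => by positivity)]
    _ ≤ c ^ P * (t : ℝ) ^ δ := by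
        refine mul_le_mul_of_nonneg_right ?_ (by positivity)
        rw [Finset.prod_ite, Finset.prod_const, Finset.prod_const_one, mul_one]
        refine pow_le_pow_right₀ hc ?_
        calc _ ≤ (Finset.range P).card := Finset.card_le_card (fun p hp => by
                simpa using (Finset.mem_filter.mp hp).2)
          _ = P := Finset.card_range P

section ideals
variable (K : Type*) [Field K] [NumberField K]

/-- Number of divisors of an ideal. -/
noncomputable def idDiv (I : Ideal (𝓞 K)) : ℕ := Set.ncard {J : Ideal (𝓞 K) | J ∣ I}

theorem idDiv_fin (I : Ideal (𝓞 K)) (hI : I ≠ 0) : {J : Ideal (𝓞 K) | J ∣ I}.Finite := by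
  have h : Finite {J : Ideal (𝓞 K) // J ∣ I} :=
    (UniqueFactorizationMonoid.fintypeSubtypeDvd I hI).finite
  exact Set.finite_coe_iff.mp h

theorem idDiv_mul (I I' : Ideal (𝓞 K)) (hI : I ≠ 0) (hI' : I' ≠ 0) :
    idDiv K (I * I') ≤ idDiv K I * idDiv K I' := by
  unfold idDiv
  have hf := (idDiv_fin K I hI).prod (idDiv_fin K I' hI')
  have : {J : Ideal (𝓞 K) | J ∣ I * I'} ⊆
      Set.image (fun p : Ideal (𝓞 K) × Ideal (𝓞 K) => p.1 * p.2) ({J | J ∣ I} ×ˢ {J | J ∣ I'}) := by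
    intro J hJ
    obtain ⟨a, b, ha, hb, rfl⟩ := exists_dvd_and_dvd_of_dvd_mul (show J ∣ I * I' from hJ)
    exact ⟨(a, b), ⟨ha, hb⟩, rfl⟩
  refine (Set.ncard_le_ncard this (hf.image _)).trans ((Set.ncard_image_le hf).trans ?_)
  rw [Set.ncard_prod]

theorem idDiv_one : idDiv K 1 = 1 := by
  unfold idDiv
  have : {J : Ideal (𝓞 K) | J ∣ 1} = {1} := by
    ext J
    exact isUnit_iff_dvd_one.symm.trans (by
      rw [Set.mem_singleton_iff, Ideal.one_eq_top]; exact Ideal.isUnit_iff)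
  rw [this, Set.ncard_singleton]

theorem idDiv_prime_pow (P : Ideal (𝓞 K)) (hP : Prime P) (a : ℕ) : idDiv K (P ^ a) ≤ a + 1 := by
  unfold idDiv
  have : {J : Ideal (𝓞 K) | J ∣ P ^ a} ⊆ ((Finset.range (a + 1)).image (fun i => P ^ i) : Finset _) := by
    intro J hJ
    obtain ⟨i, hi, h⟩ := (dvd_prime_pow hP a).mp hJ
    rw [Finset.mem_coe, Finset.mem_image]
    exact ⟨i, Finset.mem_range.mpr (by omega), (associated_iff_eq.mp h).symm⟩
  refine (Set.ncard_le_ncard this (Finset.finite_toSet _)).trans ?_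
  rw [Set.ncard_coe_finset]
  exact Finset.card_image_le.trans (by simp)

theorem idDiv_multiset (s : Multiset (Ideal (𝓞 K))) (hs : ∀ P ∈ s, Prime P) (a : ℕ) :
    idDiv K (s.prod ^ a) ≤ (a + 1) ^ s.card := by
  induction s using Multiset.induction_on with
  | empty => simp only [Multiset.prod_zero, one_pow, idDiv_one, Multiset.card_zero, pow_zero, le_refl]
  | cons P s ih =>
    have hs' : ∀ Q ∈ s, Prime Q := fun Q hQ => hs Q (Multiset.mem_cons_of_mem hQ)
    have hP := hs P (Multiset.mem_cons_self _ _)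
    rw [Multiset.prod_cons, mul_pow, Multiset.card_cons, pow_succ, mul_comm (_ ^ _) (a + 1)]
    refine (idDiv_mul K _ _ (pow_ne_zero _ hP.ne_zero) (pow_ne_zero _ ?_)).trans
      (Nat.mul_le_mul (idDiv_prime_pow K P hP a) (ih hs'))
    intro h0
    exact (hs' 0 (by rwa [Multiset.prod_eq_zero_iff] at h0)).ne_zero rfl

theorem idDiv_rat_prime (p : ℕ) (hp : p.Prime) (a : ℕ) :
    idDiv K (Ideal.span {(p : 𝓞 K)} ^ a) ≤ (a + 1) ^ Module.finrank ℚ K := by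
  classical
  set I := Ideal.span {(p : 𝓞 K)} with hI
  have hI0 : I ≠ 0 := by
    rw [hI, Ne, Ideal.zero_eq_bot, Ideal.span_singleton_eq_bot]
    exact_mod_cast hp.ne_zero
  have hN : Ideal.absNorm I = p ^ Module.finrank ℚ K := by
    rw [hI, Ideal.absNorm_span_singleton]
    have : ((p : ℕ) : 𝓞 K) = algebraMap ℤ (𝓞 K) (p : ℤ) := by simp
    rw [this, Algebra.norm_algebraMap, RingOfIntegers.rank, Int.natAbs_pow, Int.natAbs_natCast]
  set s := UniqueFactorizationMonoid.normalizedFactors I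
  have hs : s.prod = I := Ideal.prod_normalizedFactors_eq_self hI0
  have hsp : ∀ P ∈ s, Prime P := fun P hP => UniqueFactorizationMonoid.prime_of_normalized_factor P hP
  rw [← hs]
  refine (idDiv_multiset K s hsp a).trans (Nat.pow_le_pow_right (by omega) ?_)
  have h1 : p ^ s.card ≤ Ideal.absNorm s.prod := by
    rw [map_multiset_prod, ← Multiset.prod_replicate, ← Multiset.map_const']
    refine Multiset.prod_map_le_prod_map₀ _ _ (by simp) ?_
    intro P hP
    have hdvd : Ideal.absNorm P ∣ p ^ Module.finrank ℚ K := by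
      rw [← hN, ← hs]; exact map_dvd _ (Multiset.dvd_prod hP)
    obtain ⟨i, hi, h⟩ := (Nat.dvd_prime_pow hp).mp hdvd
    rw [h]
    refine Nat.le_self_pow ?_ p
    rintro rfl
    rw [pow_zero, Ideal.absNorm_eq_one_iff] at h
    exact (hsp P hP).not_isUnit (Ideal.isUnit_iff.mpr h)
  rw [hs, hN] at h1
  exact (Nat.pow_le_pow_iff_right hp.one_lt).mp h1

theorem idDiv_nat (t : ℕ) (ht : t ≠ 0) :
    idDiv K (Ideal.span {(t : 𝓞 K)}) ≤ t.divisors.card ^ Module.finrank ℚ K := by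
  have key : ∀ s : Finset ℕ, (∀ p ∈ s, p.Prime) → ∀ f : ℕ → ℕ,
      (∏ p ∈ s, Ideal.span {(p : 𝓞 K)} ^ f p ≠ 0) ∧
      idDiv K (∏ p ∈ s, Ideal.span {(p : 𝓞 K)} ^ f p) ≤
        ∏ p ∈ s, (f p + 1) ^ Module.finrank ℚ K := by
    classical
    intro s
    induction s using Finset.induction_on with
    | empty =>
      intro _ f
      simp only [Finset.prod_empty, idDiv_one, le_refl, and_true]
      exact one_ne_zero
    | insert q s hq ih =>
      intro hs f
      have hI0 : Ideal.span {(q : 𝓞 K)} ^ f q ≠ 0 := by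
        refine pow_ne_zero _ ?_
        rw [Ne, Ideal.zero_eq_bot, Ideal.span_singleton_eq_bot]
        exact_mod_cast (hs q (Finset.mem_insert_self _ _)).ne_zero
      obtain ⟨h1, h2⟩ := ih (fun p hp => hs p (Finset.mem_insert_of_mem hp)) f
      rw [Finset.prod_insert hq, Finset.prod_insert hq]
      exact ⟨mul_ne_zero hI0 h1, (idDiv_mul K _ _ hI0 h1).trans
        (Nat.mul_le_mul (idDiv_rat_prime K q (hs q (Finset.mem_insert_self _ _)) _) h2)⟩
  have h := (key t.primeFactors (fun p hp => Nat.prime_of_mem_primeFactors hp) t.factorization).2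
  rw [Nat.card_divisors ht, ← Finset.prod_pow]
  convert h using 2
  simp_rw [Ideal.span_singleton_pow]
  rw [Ideal.prod_span_singleton]
  congr 2
  conv_lhs => rw [← Nat.prod_factorization_pow_eq_self ht]
  rw [Finsupp.prod, Nat.support_factorization]
  push_cast; rfl

open Classical in
theorem ideals_norm_le (t : ℕ) (ht : t ≠ 0) (S : Finset (Ideal (𝓞 K)))
    (hS : ∀ J ∈ S, Ideal.absNorm J = t) : S.card ≤ t.divisors.card ^ Module.finrank ℚ K := by
  refine le_trans ?_ (idDiv_nat K t ht)
  unfold idDiv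
  rw [← Set.ncard_coe_finset]
  refine Set.ncard_le_ncard ?_ (idDiv_fin K _ ?_)
  · intro J hJ
    rw [Set.mem_ofPred_eq, Ideal.dvd_span_singleton, ← hS J hJ]
    exact Ideal.absNorm_mem J
  · rw [Ne, Ideal.zero_eq_bot, Ideal.span_singleton_eq_bot]
    exact_mod_cast ht
end ideals
end

section
open NumberField UniqueFactorizationMonoid
open scoped IntermediateField

section
variable (F K : Type*) [Field F] [NumberField F] [Field K] [NumberField K] [Algebra F K]

theorem unram_aux (p : ℕ) (hD : ¬ (p : ℤ) ∣ discr K) (hp : p.Prime)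
    (v : Ideal (𝓞 F)) (hv : v.IsMaximal) (hvp : v.under ℤ = Ideal.span {(p : ℤ)})
    (w : Ideal (𝓞 K)) (hw : w.IsMaximal) [w.LiesOver v] :
    ¬ v.map (algebraMap (𝓞 F) (𝓞 K)) ≤ w ^ 2 := by
  intro h
  apply hD
  have hwp : w.under ℤ = Ideal.span {(p : ℤ)} := by
    rw [← hvp, Ideal.over_def w v, Ideal.under_under]
  have hpp : Prime (p : ℤ) := Nat.prime_iff_prime_int.mp hp
  have hmax : (Ideal.span {(p : ℤ)}).IsMaximal :=
    ((Ideal.span_singleton_prime hpp.ne_zero).mpr hpp).isMaximal (by simpa using hpp.ne_zero)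
  have h2 : (Ideal.span {(p : ℤ)}).map (algebraMap ℤ (𝓞 K)) ≤ w ^ 2 := by
    refine le_trans ?_ h
    rw [IsScalarTower.algebraMap_eq ℤ (𝓞 F) (𝓞 K), ← Ideal.map_map]
    refine Ideal.map_mono ?_
    rw [Ideal.map_le_iff_le_comap, ← hvp]
  have h3 := pow_sub_one_dvd_differentIdeal ℤ w 2 (p := Ideal.span {(p : ℤ)})
    (by simpa using hpp.ne_zero) (Ideal.dvd_iff_le.mpr h2)
  have h4 := Ideal.absNorm_dvd_absNorm_of_le (Ideal.dvd_iff_le.mp h3)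
  rw [absNorm_differentIdeal K] at h4
  have h5 : (p : ℤ) ∣ (Ideal.absNorm w : ℤ) := by
    rw [← Ideal.mem_span_singleton, ← hwp, Ideal.under_def, Ideal.mem_comap]
    simpa using Ideal.absNorm_mem w
  have h6 : p ∣ (discr K).natAbs := by
    refine (Int.natCast_dvd_natCast.mp h5).trans ?_
    simpa using h4
  exact Int.natCast_dvd.mpr h6

open Classical in
theorem even_mult (p : ℕ) (hD : ¬ (p : ℤ) ∣ discr K) (hp : p.Prime)
    (a : Ideal (𝓞 F)) (ha : a ≠ ⊥) (J : Ideal (𝓞 K))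
    (hJ : J ^ 2 = a.map (algebraMap (𝓞 F) (𝓞 K)))
    (v : Ideal (𝓞 F)) (hv : v.IsMaximal) (hvp : v.under ℤ = Ideal.span {(p : ℤ)}) :
    Even ((normalizedFactors a).count v) := by
  have hpp : Prime (p : ℤ) := Nat.prime_iff_prime_int.mp hp
  have hv0 : v ≠ ⊥ := by
    rintro rfl
    have : (p : ℤ) ∈ (⊥ : Ideal (𝓞 F)).under ℤ := by
      rw [hvp]; exact Ideal.mem_span_singleton_self _
    rw [Ideal.under_def, Ideal.mem_comap, Ideal.mem_bot] at this
    simp at this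
    exact hp.ne_zero this
  obtain ⟨w, hw, hwv⟩ := Ideal.exists_maximal_ideal_liesOver_of_isIntegral (S := 𝓞 K) v
  have hw0 : w ≠ ⊥ := Ideal.ne_bot_of_liesOver_of_ne_bot hv0 w
  have hvi : Irreducible v := (Ideal.prime_of_isPrime hv0 hv.isPrime).irreducible
  have hwi : Irreducible w := (Ideal.prime_of_isPrime hw0 hw.isPrime).irreducible
  have he : v.ramificationIdx' w = 1 := by
    refine Ideal.ramificationIdx'_spec ?_ (unram_aux F K p hD hp v hv hvp w hw)
    rw [pow_one, Ideal.map_le_iff_le_comap, ← Ideal.under_def, ← Ideal.over_def w v]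
  have h := Ideal.IsDedekindDomain.emultiplicity_map_eq_ramificationIdx'_mul ha hvi hwi hw0
  have hJ0 : J ^ 2 ≠ 0 := by
    rw [hJ]
    exact Ideal.map_ne_bot_of_ne_bot ha
  rw [he, ← hJ, emultiplicity_eq_count_normalizedFactors hwi hJ0,
    emultiplicity_eq_count_normalizedFactors hvi ha, normalizedFactors_pow, normalize_eq,
    normalize_eq, Multiset.count_nsmul] at h
  simp only [Nat.cast_one, one_mul, Nat.cast_inj] at h
  rw [← h]
  exact even_two_mul _

open Classical in
theorem even_norm (p : ℕ) (hp : p.Prime) : ∀ (N : ℕ) (a : Ideal (𝓞 F)), a ≠ ⊥ →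
    Ideal.absNorm a = N → 
    (∀ v : Ideal (𝓞 F), v.IsMaximal → v.under ℤ = Ideal.span {(p : ℤ)} →
      Even ((normalizedFactors a).count v)) →
    Even (N.factorization p) := by
  intro N
  induction N using Nat.strong_induction_on with
  | _ N ih =>
    intro a ha hN h
    by_cases hpN : p ∣ N
    swap
    · rw [Nat.factorization_eq_zero_of_not_dvd hpN]; exact Even.zero
    obtain ⟨v, hv, hvp, hva⟩ := Ideal.exists_isMaximal_dvd_of_dvd_absNorm' hp a (hN ▸ hpN)
    have hv0 : v ≠ ⊥ := by
      rintro rfl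
      exact ha (zero_dvd_iff.mp hva)
    have hvi : Irreducible v := (Ideal.prime_of_isPrime hv0 hv.isPrime).irreducible
    have h1 := h v hv hvp
    have hmem : v ∈ normalizedFactors a := by
      obtain ⟨q, hq, hqv⟩ := exists_mem_normalizedFactors_of_dvd ha hvi hva
      rwa [associated_iff_eq.mp hqv]
    have hc := Multiset.count_pos.mpr hmem
    have hc2 : 2 ≤ (normalizedFactors a).count v := by
      obtain ⟨j, hj⟩ := h1; omega
    have hdvd : v ^ 2 ∣ a := by
      refine pow_dvd_of_le_emultiplicity ?_
      rw [emultiplicity_eq_count_normalizedFactors hvi ha, normalize_eq]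
      exact_mod_cast hc2
    obtain ⟨b, rfl⟩ := hdvd
    have hb0 : b ≠ 0 := right_ne_zero_of_mul ha
    have hv20 : v ^ 2 ≠ 0 := left_ne_zero_of_mul ha
    have hbN : Ideal.absNorm b ≠ 0 := by rwa [Ne, Ideal.absNorm_eq_zero_iff]
    have hvN : Ideal.absNorm v ≠ 0 := by rwa [Ne, Ideal.absNorm_eq_zero_iff]
    have hv1 : Ideal.absNorm v ≠ 1 := by
      rw [Ne, Ideal.absNorm_eq_one_iff]; exact hv.ne_top
    rw [map_mul, map_pow] at hN
    have hlt : Ideal.absNorm b < N := by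
      rw [← hN]
      have h2 : 2 ≤ Ideal.absNorm v := by omega
      have : 1 < Ideal.absNorm v ^ 2 := by nlinarith
      have := Nat.pos_of_ne_zero hbN
      nlinarith
    have hb := ih _ hlt b hb0 rfl (by
      intro v' hv' hvp'
      have := h v' hv' hvp'
      rw [normalizedFactors_mul hv20 hb0, normalizedFactors_pow, Multiset.count_add,
        Multiset.count_nsmul, Nat.even_add] at this
      exact this.mp (even_two_mul _))
    rw [← hN, Nat.factorization_mul (pow_ne_zero _ hvN) hbN, Nat.factorization_pow]
    simp only [Finsupp.add_apply, Finsupp.smul_apply, smul_eq_mul]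
    exact (even_two_mul _).add hb
end

theorem even_type (K : Type*) [Field K] [NumberField K] (α : 𝓞 K) (hα : α ≠ 0)
    (hev : Even (Module.finrank ℚ⟮(α : K)⟯ K)) (J : Ideal (𝓞 K)) (hJ : J ^ 2 = Ideal.span {α})
    (p : ℕ) (hp : p.Prime) (hD : ¬ (p : ℤ) ∣ discr K) :
    Even ((Ideal.absNorm J).factorization p) := by
  let F := ℚ⟮(α : K)⟯
  have hint : IsIntegral ℤ (IntermediateField.AdjoinSimple.gen ℚ (α : K)) := by
    have : IsIntegral ℤ (α : K) := α.isIntegral_coe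
    rw [← IntermediateField.AdjoinSimple.algebraMap_gen ℚ (α : K)] at this
    exact (isIntegral_algebraMap_iff (algebraMap F K).injective).mp this
  let a0 : 𝓞 F := ⟨IntermediateField.AdjoinSimple.gen ℚ (α : K), hint⟩
  have ha0 : algebraMap (𝓞 F) (𝓞 K) a0 = α := by
    apply RingOfIntegers.ext
    exact IntermediateField.AdjoinSimple.algebraMap_gen ℚ (α : K)
  let a : Ideal (𝓞 F) := Ideal.span {a0}
  have hmap : J ^ 2 = a.map (algebraMap (𝓞 F) (𝓞 K)) := by
    rw [hJ, Ideal.map_span, Set.image_singleton, ha0]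
  have ha : a ≠ ⊥ := by
    rw [Ne, Ideal.span_singleton_eq_bot]
    rintro h
    apply hα
    rw [← ha0, h, map_zero]
  have hm := even_norm F p hp _ a ha rfl (fun v hv hvp => even_mult F K p hD hp a ha J hmap v hv hvp)
  have hN := congrArg Ideal.absNorm hmap
  rw [map_pow, Ideal.absNorm_algebraMap, ← IsFractionRing.finrank_eq (𝓞 F) F (𝓞 K) K] at hN
  have hf := congrArg (fun t => Nat.factorization t p) hN
  simp only [Nat.factorization_pow, Finsupp.smul_apply, smul_eq_mul] at hf
  obtain ⟨k, hk⟩ := hev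
  obtain ⟨m, hm⟩ := hm
  rw [hk, hm] at hf
  refine ⟨k * m, ?_⟩
  linarith
end

section
open NumberField
open scoped IntermediateField

theorem sqfree_decomp (t D : ℕ) (ht : t ≠ 0) (hD : D ≠ 0)
    (h : ∀ p : ℕ, p.Prime → ¬ p ∣ D → Even (t.factorization p)) :
    ∃ a b : ℕ, a ∣ D ∧ b ^ 2 * a = t := by
  obtain ⟨a, b, hab, hsq⟩ := Nat.sq_mul_squarefree t
  refine ⟨a, b, ?_, hab⟩
  rw [← Nat.prod_primeFactors_of_squarefree hsq]
  refine Finset.prod_primes_dvd _ (fun p hp => (Nat.prime_of_mem_primeFactors hp).prime) ?_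
  intro p hp
  have hpp := Nat.prime_of_mem_primeFactors hp
  by_contra hpD
  have h1 := h p hpp hpD
  have ha0 : a ≠ 0 := by rintro rfl; simp at hab; exact ht hab.symm
  have hb0 : b ≠ 0 := by rintro rfl; simp at hab; exact ht hab.symm
  have h2 : a.factorization p = 1 := by
    have := hsq.natFactorization_le_one p
    have := hpp.factorization_pos_of_dvd ha0 (Nat.dvd_of_mem_primeFactors hp)
    omega
  rw [← hab, Nat.factorization_mul (pow_ne_zero _ hb0) ha0, Nat.factorization_pow] at h1
  simp only [Finsupp.add_apply, Finsupp.smul_apply, smul_eq_mul, h2] at h1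
  obtain ⟨j, hj⟩ := h1
  omega

open Classical in
theorem even_count (n : ℕ) (ε : ℝ) (hε : 0 < ε) :
    ∃ C : ℝ, 0 < C ∧ ∀ (K : Type*) [Field K] [NumberField K], Module.finrank ℚ K = n →
      ∀ S : Finset (Ideal (𝓞 K)), (∀ J ∈ S, Ideal.absNorm J ≠ 0 ∧
        (Ideal.absNorm J : ℝ) ≤ 3 ^ n * ((discr K).natAbs : ℝ) ^ (1 / 2 : ℝ) ∧
        ∀ p : ℕ, p.Prime → ¬ (p : ℤ) ∣ discr K → Even ((Ideal.absNorm J).factorization p)) →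
      (S.card : ℝ) ≤ C * ((discr K).natAbs : ℝ) ^ (1 / 4 + ε) := by
  set δ := ε / (n + 1) with hδ
  have hδ0 : 0 < δ := by positivity
  obtain ⟨C1, hC1, hdiv⟩ := div_bound δ hδ0
  set E := ((3 : ℝ) ^ n) ^ δ with hE
  have hE0 : 0 < E := by positivity
  refine ⟨C1 * (2 * 2 ^ n) * (C1 * E) ^ n, by positivity, ?_⟩
  intro K _ _ hK S hS
  set d := (discr K).natAbs with hd
  have hd0 : d ≠ 0 := Int.natAbs_ne_zero.mpr (discr_ne_zero K)
  set D : ℝ := (d : ℝ) with hDdef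
  have hD1 : 1 ≤ D := by
    rw [hDdef]; exact_mod_cast Nat.one_le_iff_ne_zero.mpr hd0
  have hD0 : 0 < D := by linarith
  set R : ℝ := 2 ^ n * D ^ (1 / 4 : ℝ) with hR
  have hD4 : 1 ≤ D ^ (1 / 4 : ℝ) := Real.one_le_rpow hD1 (by norm_num)
  have hR1 : 1 ≤ R := by
    have : (1 : ℝ) ≤ 2 ^ n := one_le_pow₀ (by norm_num)
    rw [hR]; nlinarith
  have hR2 : 3 ^ n * D ^ (1 / 2 : ℝ) ≤ R ^ 2 := by
    have e : (D ^ (1 / 4 : ℝ)) ^ 2 = D ^ (1 / 2 : ℝ) := by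
      rw [← Real.rpow_natCast, ← Real.rpow_mul hD0.le]; norm_num
    rw [hR, mul_pow, e]
    refine mul_le_mul_of_nonneg_right ?_ (by positivity)
    rw [← pow_mul, mul_comm n 2, pow_mul]
    gcongr
    norm_num
  set T := S.image (fun J => Ideal.absNorm J) with hT
  have hTcard : (T.card : ℝ) ≤ C1 * D ^ δ * (2 * R) := by
    have hsub : T ⊆ (d.divisors ×ˢ Finset.range (⌊R⌋₊ + 1)).image (fun q => q.2 ^ 2 * q.1) := by
      intro t ht
      obtain ⟨J, hJ, rfl⟩ := Finset.mem_image.mp ht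
      obtain ⟨h0, hle, hev⟩ := hS J hJ
      obtain ⟨a, b, had, hab⟩ := sqfree_decomp (Ideal.absNorm J) d h0 hd0 (fun p hp hpd =>
        hev p hp (fun h => hpd (Int.natCast_dvd.mp h)))
      refine Finset.mem_image.mpr ⟨(a, b), Finset.mem_product.mpr
        ⟨Nat.mem_divisors.mpr ⟨had, hd0⟩, Finset.mem_range.mpr (Nat.lt_succ_of_le ?_)⟩, hab⟩
      refine Nat.le_floor ?_
      have ha1 : 1 ≤ a := Nat.one_le_iff_ne_zero.mpr (by rintro rfl; simp at hab; exact h0 hab.symm)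
      have hb2 : b ^ 2 ≤ Ideal.absNorm J := by rw [← hab]; exact Nat.le_mul_of_pos_right _ ha1
      have hb2' : (b : ℝ) ^ 2 ≤ (Ideal.absNorm J : ℝ) := by exact_mod_cast hb2
      exact le_of_sq_le_sq (hb2'.trans (hle.trans hR2)) (by linarith)
    have h1 := (Finset.card_le_card hsub).trans Finset.card_image_le
    rw [Finset.card_product, Finset.card_range] at h1
    have h1' : (T.card : ℝ) ≤ (d.divisors.card : ℝ) * ((⌊R⌋₊ : ℝ) + 1) := by exact_mod_cast h1
    refine h1'.trans ?_
    have h2 := hdiv d hd0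
    have h3 : ((⌊R⌋₊ : ℝ) + 1) ≤ 2 * R := by
      have := Nat.floor_le (show 0 ≤ R by linarith)
      linarith
    exact mul_le_mul h2 h3 (by positivity) (by positivity)
  have hfib : ∀ t ∈ T, ((S.filter (fun J => Ideal.absNorm J = t)).card : ℝ)
      ≤ (C1 * E * D ^ δ) ^ n := by
    intro t ht
    obtain ⟨J, hJ, rfl⟩ := Finset.mem_image.mp ht
    obtain ⟨h0, hle, _⟩ := hS J hJ
    have h1 := ideals_norm_le K (Ideal.absNorm J) h0
      (S.filter (fun J' => Ideal.absNorm J' = Ideal.absNorm J))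
      (fun J' hJ' => (Finset.mem_filter.mp hJ').2)
    rw [hK] at h1
    have h1' : ((S.filter (fun J' => Ideal.absNorm J' = Ideal.absNorm J)).card : ℝ) ≤
      ((Ideal.absNorm J).divisors.card : ℝ) ^ n := by exact_mod_cast h1
    refine h1'.trans ?_
    refine pow_le_pow_left₀ (by positivity) ((hdiv _ h0).trans ?_) n
    rw [mul_assoc]
    refine mul_le_mul_of_nonneg_left ?_ (by linarith)
    rw [hE, ← Real.mul_rpow (by positivity) hD0.le]
    refine Real.rpow_le_rpow (by positivity) (hle.trans ?_) hδ0.le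
    refine mul_le_mul_of_nonneg_left ?_ (by positivity)
    calc D ^ (1 / 2 : ℝ) ≤ D ^ (1 : ℝ) := Real.rpow_le_rpow_of_exponent_le hD1 (by norm_num)
      _ = D := Real.rpow_one _
  have hsum : (S.card : ℝ) ≤ T.card * (C1 * E * D ^ δ) ^ n := by
    rw [Finset.card_eq_sum_card_image (fun J => Ideal.absNorm J) S]
    push_cast
    rw [← nsmul_eq_mul]
    exact Finset.sum_le_card_nsmul _ _ _ hfib
  have hpow : (D ^ δ) ^ (n + 1) = D ^ ε := by
    rw [← Real.rpow_natCast, ← Real.rpow_mul hD0.le, hδ]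
    congr 1
    push_cast
    field_simp
  calc (S.card : ℝ) ≤ T.card * (C1 * E * D ^ δ) ^ n := hsum
    _ ≤ C1 * D ^ δ * (2 * R) * (C1 * E * D ^ δ) ^ n := by gcongr
    _ = C1 * (2 * 2 ^ n) * (C1 * E) ^ n * (D ^ (1 / 4 : ℝ) * (D ^ δ) ^ (n + 1)) := by
        rw [hR]; ring
    _ = _ := by rw [hpow, ← Real.rpow_add hD0]
end

section
open scoped IntermediateField

theorem norm_bound (K : Type*) [Field K] [NumberField K] (n : ℕ) (hn : 1 ≤ n)
    (hK : Module.finrank ℚ K = n) (J : Ideal (𝓞 K)) (α : 𝓞 K) (hJ : J ^ 2 = Ideal.span {α})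
    (hw : ∀ w : InfinitePlace K, w (α : K) ≤ 9 * ((discr K).natAbs : ℝ) ^ (1 / (n : ℝ))) :
    (Ideal.absNorm J : ℝ) ≤ 3 ^ n * ((discr K).natAbs : ℝ) ^ (1 / 2 : ℝ) := by
  set D : ℝ := ((discr K).natAbs : ℝ) with hD
  have hD0 : 0 ≤ D := by rw [hD]; positivity
  have h1 : ((Ideal.absNorm J : ℝ)) ^ 2 = |((Algebra.norm ℚ (α : K) : ℚ) : ℝ)| := by
    have := congrArg Ideal.absNorm hJ
    rw [map_pow, Ideal.absNorm_span_singleton] at this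
    have h2 : ((Ideal.absNorm J : ℝ)) ^ 2 = (((Algebra.norm ℤ α).natAbs : ℕ) : ℝ) := by
      exact_mod_cast this
    rw [h2, Nat.cast_natAbs]
    have h3 : (Algebra.norm ℚ (α : K) : ℚ) = ((Algebra.norm ℤ α : ℤ) : ℚ) :=
      (Algebra.coe_norm_int α).symm
    rw [h3]
    push_cast
    rfl
  have h2 : |((Algebra.norm ℚ (α : K) : ℚ) : ℝ)| ≤ (9 * D ^ (1 / (n : ℝ))) ^ n := by
    have h3 := InfinitePlace.prod_eq_abs_norm (α : K)
    have h4 : |((Algebra.norm ℚ (α : K) : ℚ) : ℝ)| = ∏ w : InfinitePlace K, w (α : K) ^ w.mult := by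
      rw [h3]; push_cast; rfl
    have hsm : ∑ w : InfinitePlace K, w.mult = n := InfinitePlace.sum_mult_eq.trans hK
    have h5 : (9 * D ^ (1 / (n : ℝ))) ^ n = ∏ w : InfinitePlace K, (9 * D ^ (1 / (n : ℝ))) ^ w.mult := by
      rw [Finset.prod_pow_eq_pow_sum, hsm]
    rw [h4, h5]
    exact Finset.prod_le_prod (fun w _ => by positivity)
      (fun w _ => pow_le_pow_left₀ (by positivity) (hw w) _)
  have h3 : (9 * D ^ (1 / (n : ℝ))) ^ n = (3 ^ n * D ^ (1 / 2 : ℝ)) ^ 2 := by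
    rw [mul_pow, mul_pow, ← Real.rpow_natCast (D ^ (1 / (n : ℝ))), ← Real.rpow_mul hD0,
      ← Real.rpow_natCast (D ^ (1 / 2 : ℝ)), ← Real.rpow_mul hD0, ← pow_mul, mul_comm n 2, pow_mul]
    have : (n : ℝ) ≠ 0 := by positivity
    rw [one_div_mul_cancel this]
    norm_num
  rw [← h1, h3] at h2
  exact le_of_sq_le_sq h2 (by positivity)

theorem ideal_sq_inj (K : Type*) [Field K] [NumberField K] (I J : Ideal (𝓞 K))
    (h : I ^ 2 = J ^ 2) : I = J := by
  apply dvd_antisymm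
  · exact (UniqueFactorizationMonoid.pow_dvd_pow_iff_dvd two_ne_zero).mp h.dvd
  · exact (UniqueFactorizationMonoid.pow_dvd_pow_iff_dvd two_ne_zero).mp h.symm.dvd
end

/-- **Bhargava–Shankar–Taniguchi–Thorne–Tsimerman–Zhao.** For each degree `n ≥ 3` and each
`ε > 0` there is a constant `C = C(n,ε)` such that every number field `K` of degree `n`
satisfies `|Cl_K[2]| ≤ C · D_K^{1/2 - 1/(2n) + ε}`. -/
theorem two_torsion_degree_n_fields (n : ℕ) (hn : 3 ≤ n) (ε : ℝ) (hε : 0 < ε) :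
    ∃ C : ℝ, 0 < C ∧ ∀ (K : Type*) [Field K] [NumberField K],
      Module.finrank ℚ K = n →
      (clTor K 2 : ℝ) ≤ C * ((NumberField.discr K).natAbs : ℝ) ^
        ((1 : ℝ) / 2 - 1 / (2 * (n : ℝ)) + ε) := by
  classical
  obtain ⟨C1, hC1, h1⟩ := odd_count n (by omega) (min ε (1 / 2)) (by positivity) (min_le_right _ _)
  obtain ⟨C2, hC2, h2⟩ := even_count n ε hε
  refine ⟨C1 + C2, by positivity, ?_⟩
  intro K _ _ hK
  have h1K := h1 K hK
  have h2K := h2 K hK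
  set D : ℝ := ((discr K).natAbs : ℝ) with hD
  have hD1 : 1 ≤ D := by
    rw [hD]; exact_mod_cast Int.natAbs_pos.mpr (discr_ne_zero K)
  have hstep := fun c : {c : ClassGroup (𝓞 K) // c ^ 2 = 1} => mink_step K c.1 c.2
  choose J α hα hJ hc hw using hstep
  rw [hK] at hw
  have hfin : Finite {c : ClassGroup (𝓞 K) // c ^ 2 = 1} := inferInstance
  have := Fintype.ofFinite {c : ClassGroup (𝓞 K) // c ^ 2 = 1}
  have hJinj : Function.Injective (fun c => (J c : Ideal (𝓞 K))) := by
    intro c c' h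
    apply Subtype.ext
    rw [← hc c, ← hc c', Subtype.ext h]
  have hαinj : Function.Injective α := by
    intro c c' h
    refine hJinj (ideal_sq_inj K _ _ ?_)
    rw [hJ c, hJ c', h]
  set So := Finset.univ.filter (fun c => Odd (Module.finrank
    (IntermediateField.adjoin ℚ {(α c : K)}) K)) with hSo
  set Se := Finset.univ.filter (fun c => ¬ Odd (Module.finrank
    (IntermediateField.adjoin ℚ {(α c : K)}) K)) with hSe
  have hcard : clTor K 2 = So.card + Se.card := by
    unfold clTor
    rw [Nat.card_eq_fintype_card, ← Finset.card_univ, hSo, hSe,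
      Finset.card_filter_add_card_filter_not]
  have ho : (So.card : ℝ) ≤ C1 * D ^ ((1 : ℝ) / 2 - 1 / (2 * (n : ℝ)) + ε) := by
    have := h1K (So.image α) (by
      intro a ha
      obtain ⟨c, hcm, rfl⟩ := Finset.mem_image.mp ha
      refine ⟨hw c, (Finset.mem_filter.mp hcm).2, ?_⟩
      have hN := congrArg Ideal.absNorm (hJ c)
      rw [map_pow, Ideal.absNorm_span_singleton] at hN
      rcases Int.natAbs_eq (Algebra.norm ℤ (α c)) with h | h
      · exact ⟨1, by norm_num, (Ideal.absNorm (J c : Ideal (𝓞 K)) : ℤ), by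
          rw [h, ← hN]; push_cast; ring⟩
      · exact ⟨-1, by norm_num, (Ideal.absNorm (J c : Ideal (𝓞 K)) : ℤ), by
          rw [h, ← hN]; push_cast; ring⟩)
    rw [Finset.card_image_of_injective _ hαinj] at this
    refine this.trans (mul_le_mul_of_nonneg_left ?_ hC1.le)
    refine Real.rpow_le_rpow_of_exponent_le hD1 ?_
    linarith [min_le_left ε (1 / 2)]
  have he : (Se.card : ℝ) ≤ C2 * D ^ ((1 : ℝ) / 2 - 1 / (2 * (n : ℝ)) + ε) := by
    have := h2K (Se.image (fun c => (J c : Ideal (𝓞 K)))) (by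
      intro I hI
      obtain ⟨c, hcm, rfl⟩ := Finset.mem_image.mp hI
      refine ⟨Ideal.absNorm_ne_zero_of_nonZeroDivisors _,
        norm_bound K n (by omega) hK _ (α c) (hJ c) (hw c), fun p hp hpD => ?_⟩
      exact even_type K (α c) (hα c) (Nat.not_odd_iff_even.mp (Finset.mem_filter.mp hcm).2)
        _ (hJ c) p hp hpD)
    rw [Finset.card_image_of_injective _ hJinj] at this
    refine this.trans (mul_le_mul_of_nonneg_left ?_ hC2.le)
    refine Real.rpow_le_rpow_of_exponent_le hD1 ?_
    have hn3 : (3 : ℝ) ≤ n := by exact_mod_cast hn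
    have : 1 / (2 * (n : ℝ)) ≤ 1 / (2 * 3) := by gcongr
    linarith
  rw [hcard]
  push_cast
  linarith
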